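/- arXiv:2004.10893 — 4 statements merged into one kernel-verified Lean document; each statement's English description precedes it below -/
import Mathlib

section
/- Let G and H be finite simple graphs. Then G and H are isomorphic (there exists an adjacency-preserving bijection between their vertex sets) if and only if there exists a CP-isomorphism matrix for G to H, i.e., G ≅_CP H. -/
open Matrix BigOperators

/-- `rel(g,g') = rel(h,h')`: the pairs `(g,g')` and `(h,h')` have the same relationship
(equal, adjacent, or distinct non-adjacent). -/
def relEq {α β : Type*} (G : SimpleGraph α) (H : SimpleGraph β)
    (g g' : α) (h h' : β) : Prop :=
  (g = g' ↔ h = h') ∧ (G.Adj g g' ↔ H.Adj h h')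

/-- `M` satisfies the linear constraints of an isomorphism matrix for `G` to `H`. -/
def IsIsoMatrix {α β : Type*} [Fintype α] [Fintype β]
    (G : SimpleGraph α) (H : SimpleGraph β)
    (M : Matrix (α × β) (α × β) ℝ) : Prop :=
  (∀ g g' : α, ∑ h : β, ∑ h' : β, M (g, h) (g', h') = 1) ∧
  (∀ h h' : β, ∑ g : α, ∑ g' : α, M (g, h) (g', h') = 1) ∧
  (∀ g g' h h', ¬ relEq G H g g' h h' → M (g, h) (g', h') = 0)

/-- `M` is completely positive: `M = B * Bᵀ` for an entrywise nonnegative `B`. -/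
def IsCP {ι : Type*} [Fintype ι] (M : Matrix ι ι ℝ) : Prop :=
  ∃ (k : ℕ) (B : Matrix ι (Fin k) ℝ), (∀ i j, 0 ≤ B i j) ∧ M = B * Bᵀ

/-!
Write `M = B * Bᵀ` with `B` nonnegative. The row and column constraints say that all the vectors
`∑ h, B (g, h)` have pairwise inner products `1`, and likewise all the vectors `∑ g, B (g, h)`.
Vectors with pairwise inner products `1` coincide, so each column of `B`, read as an `α × β` array,
has constant row sums and constant column sums: a nonzero column meets every row and every column
of the array. Nonnegativity excludes cancellation in the vanishing entries of `M`, so any two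
nonzero entries in the same column of `B` are compatible with `rel`. The support of a single nonzero
column is therefore the graph of an isomorphism; if `B = 0`, then both graphs are empty. Conversely,
the permutation matrix of an isomorphism, flattened to a vector `v`, yields the rank-one matrix
`v vᵀ`.
-/

section DotProduct

variable {ι κ R : Type*} [Fintype κ]

lemma eq_of_dotProduct_self_eq_dotProduct [CommRing R] [LinearOrder R] [IsStrictOrderedRing R]
    {u v : κ → R} (hu : u ⬝ᵥ u = u ⬝ᵥ v) (hv : v ⬝ᵥ v = u ⬝ᵥ v) : u = v := by
  have hsub : (u - v) ⬝ᵥ (u - v) = 0 := by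
    rw [sub_dotProduct, dotProduct_sub, dotProduct_sub, dotProduct_comm v u, hu, hv]
    ring
  exact sub_eq_zero.1 (dotProduct_self_eq_zero.1 hsub)

lemma sum_sum_mul_transpose_apply {ι' σ τ : Type*} [Fintype σ] [Fintype τ]
    [NonUnitalNonAssocSemiring R] (A : Matrix ι κ R) (B : Matrix ι' κ R) (x : σ → ι) (y : τ → ι') :
    ∑ s, ∑ t, (A * Bᵀ) (x s) (y t) = (∑ s, A (x s)) ⬝ᵥ ∑ t, B (y t) := by
  simp_rw [sum_dotProduct, dotProduct_sum]
  rfl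

lemma mul_eq_zero_of_mul_transpose_apply_eq_zero [Semiring R] [PartialOrder R] [IsOrderedRing R]
    {B : Matrix ι κ R} (hB : ∀ p i, 0 ≤ B p i) {p q : ι} (h : (B * Bᵀ) p q = 0) (i : κ) :
    B p i * B q i = 0 :=
  (Finset.sum_eq_zero_iff_of_nonneg fun j _ => mul_nonneg (hB p j) (hB q j)).1 h i
    (Finset.mem_univ i)

end DotProduct

lemma exists_ne_zero_of_sum_eq_sum {σ τ R : Type*} [Fintype σ] [Fintype τ] [AddCommMonoid R]
    [PartialOrder R] [IsOrderedAddMonoid R] {f : σ → R} {f' : τ → R} (hf : ∀ s, 0 ≤ f s)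
    (hsum : ∑ s, f s = ∑ t, f' t) {s : σ} (hs : f s ≠ 0) : ∃ t, f' t ≠ 0 := by
  have hne : ∑ s, f s ≠ 0 := fun h0 =>
    hs ((Finset.sum_eq_zero_iff_of_nonneg fun s _ => hf s).1 h0 s (Finset.mem_univ s))
  obtain ⟨t, -, ht⟩ := Finset.exists_ne_zero_of_sum_ne_zero (hsum ▸ hne)
  exact ⟨t, ht⟩

lemma biTotal_ne_zero_of_sum_const {α β R : Type*} [Fintype α] [Fintype β] [AddCommMonoid R]
    [PartialOrder R] [IsOrderedAddMonoid R] {P : α → β → R} (hP : ∀ g h, 0 ≤ P g h)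
    (hrow : ∀ g g', ∑ h, P g h = ∑ h, P g' h) (hcol : ∀ h h', ∑ g, P g h = ∑ g, P g h')
    {g₀ : α} {h₀ : β} (h0 : P g₀ h₀ ≠ 0) : Relator.BiTotal fun g h => P g h ≠ 0 :=
  ⟨fun g => exists_ne_zero_of_sum_eq_sum (hP g₀) (hrow g₀ g) h0,
    fun h => exists_ne_zero_of_sum_eq_sum (hP · h₀) (hcol h₀ h) h0⟩

lemma isCP_vecMulVec_self {ι : Type*} [Fintype ι] {v : ι → ℝ} (hv : ∀ p, 0 ≤ v p) :
    IsCP (vecMulVec v v) :=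
  ⟨1, replicateCol (Fin 1) v, fun p _ => hv p, vecMulVec_eq (Fin 1) v v⟩

section Graph

variable {α β : Type*} {G : SimpleGraph α} {H : SimpleGraph β}

/-- A binary relation between the vertices of `G` and those of `H` is compatible with `rel` if any
two related pairs `(g, h)` and `(g', h')` satisfy `rel(g,g') = rel(h,h')`. It need not be total on
either side. -/
def PreservesRel (G : SimpleGraph α) (H : SimpleGraph β) (r : α → β → Prop) : Prop :=
  ∀ ⦃g g' h h'⦄, r g h → r g' h' → relEq G H g g' h h'

lemma preservesRel_iso (φ : G ≃g H) : PreservesRel G H fun g h => φ g = h := by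
  rintro g g' _ _ rfl rfl
  exact ⟨φ.injective.eq_iff.symm, φ.map_adj_iff.symm⟩

lemma PreservesRel.nonempty_iso {r : α → β → Prop} (hr : PreservesRel G H r)
    (htot : Relator.BiTotal r) : Nonempty (G ≃g H) := by
  choose f hf using htot.1
  have hinj : Function.Injective f := fun a b hab => (hr (hf a) (hf b)).1.2 hab
  have hsurj : Function.Surjective f := fun h =>
    let ⟨g, hg⟩ := htot.2 h
    ⟨g, (hr (hf g) hg).1.1 rfl⟩
  exact ⟨⟨Equiv.ofBijective f ⟨hinj, hsurj⟩, fun {a b} => (hr (hf a) (hf b)).2.symm⟩⟩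

variable [Fintype α] [Fintype β]

lemma isIsoMatrix_vecMulVec_uncurry {P : α → β → ℝ} (hrow : ∀ g, ∑ h, P g h = 1)
    (hcol : ∀ h, ∑ g, P g h = 1) (hrel : PreservesRel G H fun g h => P g h ≠ 0) :
    IsIsoMatrix G H (vecMulVec (Function.uncurry P) (Function.uncurry P)) := by
  simp only [IsIsoMatrix, vecMulVec_apply, Function.uncurry_apply_pair, ← Finset.sum_mul_sum,
    hrow, hcol, mul_one, implies_true, true_and]
  intro g g' h h' hne
  by_contra h0
  exact hne (hrel (left_ne_zero_of_mul h0) (right_ne_zero_of_mul h0))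

lemma exists_isIsoMatrix_isCP_of_iso (φ : G ≃g H) : ∃ M, IsIsoMatrix G H M ∧ IsCP M := by
  classical
  let P : α → β → ℝ := fun g h => if φ g = h then 1 else 0
  have hrow (g : α) : ∑ h, P g h = 1 := by simp [P]
  have hcol (h : β) : ∑ g, P g h = 1 :=
    (φ.toEquiv.sum_comp fun x => if x = h then (1 : ℝ) else 0).trans (by simp)
  have hrel : PreservesRel G H fun g h => P g h ≠ 0 := by
    simpa [P] using preservesRel_iso φ
  have hnonneg (p : α × β) : 0 ≤ Function.uncurry P p := by
    dsimp only [Function.uncurry, P]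
    positivity
  exact ⟨_, isIsoMatrix_vecMulVec_uncurry hrow hcol hrel, isCP_vecMulVec_self hnonneg⟩

namespace IsIsoMatrix

lemma isEmpty_and_isEmpty_of_zero (hM : IsIsoMatrix G H 0) : IsEmpty α ∧ IsEmpty β :=
  ⟨⟨fun g => by simpa using hM.1 g g⟩, ⟨fun h => by simpa using hM.2.1 h h⟩⟩

variable {κ : Type*} [Fintype κ] {B : Matrix (α × β) κ ℝ}

lemma sum_row_eq (hM : IsIsoMatrix G H (B * Bᵀ)) (g g' : α) :
    ∑ h, B (g, h) = ∑ h, B (g', h) := by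
  have hdot (a b : α) : (∑ h, B (a, h)) ⬝ᵥ ∑ h, B (b, h) = 1 := by
    rw [← sum_sum_mul_transpose_apply, hM.1]
  apply eq_of_dotProduct_self_eq_dotProduct <;> simp only [hdot]

lemma sum_col_eq (hM : IsIsoMatrix G H (B * Bᵀ)) (h h' : β) :
    ∑ g, B (g, h) = ∑ g, B (g, h') := by
  have hdot (a b : β) : (∑ g, B (g, a)) ⬝ᵥ ∑ g, B (g, b) = 1 := by
    rw [← sum_sum_mul_transpose_apply B B (·, a) (·, b), hM.2.1]
  apply eq_of_dotProduct_self_eq_dotProduct <;> simp only [hdot]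

lemma preservesRel_ne_zero (hM : IsIsoMatrix G H (B * Bᵀ)) (hB : ∀ p i, 0 ≤ B p i) (i : κ) :
    PreservesRel G H fun g h => B (g, h) i ≠ 0 := by
  intro g g' h h' hne hne'
  by_contra hrel
  exact mul_ne_zero hne hne'
    (mul_eq_zero_of_mul_transpose_apply_eq_zero hB (hM.2.2 g g' h h' hrel) i)

lemma biTotal_ne_zero (hM : IsIsoMatrix G H (B * Bᵀ)) (hB : ∀ p i, 0 ≤ B p i) {p : α × β} {i : κ}
    (hp : B p i ≠ 0) : Relator.BiTotal fun g h => B (g, h) i ≠ 0 :=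
  biTotal_ne_zero_of_sum_const (fun g h => hB (g, h) i)
    (fun g g' => by simpa using congrFun (hM.sum_row_eq g g') i)
    (fun h h' => by simpa using congrFun (hM.sum_col_eq h h') i) hp

theorem nonempty_iso (hM : IsIsoMatrix G H (B * Bᵀ)) (hB : ∀ p i, 0 ≤ B p i) :
    Nonempty (G ≃g H) := by
  by_cases hne : ∃ p i, B p i ≠ 0
  · obtain ⟨p, i, hp⟩ := hne
    exact (hM.preservesRel_ne_zero hB i).nonempty_iso (hM.biTotal_ne_zero hB hp)
  · have hzero : B = 0 := by
      ext p i
      exact not_not.1 fun hp => hne ⟨p, i, hp⟩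
    have hM₀ : IsIsoMatrix G H 0 := by simpa [hzero] using hM
    obtain ⟨_, _⟩ := hM₀.isEmpty_and_isEmpty_of_zero
    exact ⟨⟨Equiv.equivOfIsEmpty α β, fun {a} => isEmptyElim a⟩⟩

end IsIsoMatrix

end Graph

/-- Two graphs are isomorphic iff there exists a `CP`-isomorphism matrix for `G` to `H`. -/
theorem iso_iff_cp_isoMatrix {α β : Type*} [Fintype α] [Fintype β]
    (G : SimpleGraph α) (H : SimpleGraph β) :
    Nonempty (G ≃g H) ↔ ∃ M, IsIsoMatrix G H M ∧ IsCP M := by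
  constructor
  · rintro ⟨φ⟩
    exact exists_isIsoMatrix_isCP_of_iso φ
  · rintro ⟨_, hM, _, B, hB, rfl⟩
    exact hM.nonempty_iso hB
end

section
/- Let G and H be finite simple graphs. Then G and H are quantum isomorphic, i.e., there exist d ≥ 1 and orthogonal projections P_{gh} ∈ ℂ^{d×d} for g ∈ V_G, h ∈ V_H with Σ_{h∈V_H} P_{gh} = I for all g ∈ V_G, Σ_{g∈V_G} P_{gh} = I for all h ∈ V_H, and P_{gh} P_{g'h'} = 0 whenever rel(g,g') ≠ rel(h,h'), if and only if there exists a CS+-isomorphism matrix for G to H, i.e., G ≅_{CS+} H. -/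
open Matrix BigOperators
open scoped ComplexOrder

/-- `M` is completely positive semidefinite: it is the Gram matrix of Hermitian
positive semidefinite complex matrices with respect to the trace inner product. -/
def IsCSPlus {ι : Type*} [Fintype ι] (M : Matrix ι ι ℝ) : Prop :=
  ∃ d : ℕ, 0 < d ∧ ∃ ρ : ι → Matrix (Fin d) (Fin d) ℂ,
    (∀ i, (ρ i).PosSemidef) ∧ ∀ i j, (M i j : ℂ) = (ρ i * ρ j).trace

/-- `G` and `H` are quantum isomorphic: there is a perfect quantum strategy given by
orthogonal projections summing to the identity along rows and columns, with orthogonality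
whenever relationships disagree. -/
def QuantumIso {α β : Type*} [Fintype α] [Fintype β]
    (G : SimpleGraph α) (H : SimpleGraph β) : Prop :=
  ∃ d : ℕ, 0 < d ∧ ∃ P : α → β → Matrix (Fin d) (Fin d) ℂ,
    (∀ g h, (P g h).IsHermitian ∧ P g h * P g h = P g h) ∧
    (∀ g, ∑ h, P g h = 1) ∧
    (∀ h, ∑ g, P g h = 1) ∧
    (∀ g g' h h', ¬ relEq G H g g' h h' → P g h * P g' h' = 0)

/-!
Normalising the trace, the matrix `tr(P_{gh} P_{g'h'}) / d` of a quantum isomorphism is a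
`CS+`-isomorphism matrix. Conversely, let `ρ` be a Gram representation of an isomorphism matrix.
The sums `∑_h ρ_{gh}` have pairwise inner products `1`, so they all coincide, and so do the sums
`∑_g ρ_{gh}`; counting shows that both are the same matrix `σ`. Positive semidefinite matrices with
`tr(ρ_i ρ_j) = 0` satisfy `ρ_i ρ_j = 0`, so their support projections are orthogonal too, and add
up along every row and column to the support projection of `σ`. Compressing to the range of `σ`
turns this projection into the identity.
-/

section Matrices

variable {n ι κ R : Type*} [Fintype n] {A B : Matrix n n R}

lemma eq_of_trace_mul_eq [CommRing R] [PartialOrder R] [StarRing R] [StarOrderedRing R]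
    [NoZeroDivisors R] (hA : A.IsHermitian) (hB : B.IsHermitian)
    (hAA : (A * A).trace = (A * B).trace) (hBB : (B * B).trace = (A * B).trace) : A = B := by
  have hdist : ((A - B)ᴴ * (A - B)).trace = 0 := by
    rw [(hA.sub hB).eq, sub_mul, mul_sub, mul_sub, trace_sub, trace_sub, trace_sub,
      trace_mul_comm B A, hAA, hBB, sub_self]
  exact sub_eq_zero.mp (trace_conjTranspose_mul_self_eq_zero_iff.mp hdist)

lemma star_trace_mul_of_isHermitian [CommSemiring R] [StarRing R] (hA : A.IsHermitian)
    (hB : B.IsHermitian) :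
    star (A * B).trace = (A * B).trace := by
  rw [← trace_conjTranspose, conjTranspose_mul, hA.eq, hB.eq, trace_mul_comm]

lemma posSemidef_of_isStarProjection [Ring R] [PartialOrder R] [StarRing R] [StarOrderedRing R]
    (hA : IsStarProjection A) : A.PosSemidef := by
  have h := posSemidef_conjTranspose_mul_self A
  rwa [← star_eq_conjTranspose, hA.isSelfAdjoint.star_eq, hA.isIdempotentElem.eq] at h

lemma trace_sum_mul_sum [NonUnitalNonAssocSemiring R] [Fintype ι] [Fintype κ]
    (S : ι → Matrix n n R) (T : κ → Matrix n n R) :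
    ((∑ i, S i) * ∑ j, T j).trace = ∑ i, ∑ j, (S i * T j).trace := by
  simp only [Finset.sum_mul_sum, trace_sum]

lemma sum_eq_sum_of_sum_trace_mul_eq [CommRing R] [PartialOrder R] [StarRing R]
    [StarOrderedRing R] [NoZeroDivisors R] [Fintype κ] {ρ : ι → κ → Matrix n n R}
    (hρ : ∀ i j, (ρ i j).IsHermitian) {c : R}
    (hc : ∀ i i', ∑ j, ∑ j', (ρ i j * ρ i' j').trace = c) (i i' : ι) :
    ∑ j, ρ i j = ∑ j, ρ i' j := by
  have hherm (i : ι) : (∑ j, ρ i j).IsHermitian := isSelfAdjoint_sum _ fun j _ ↦ hρ i j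
  apply eq_of_trace_mul_eq (hherm i) (hherm i') <;> simp only [trace_sum_mul_sum, hc]

end Matrices

section Support

variable {n ι 𝕜 : Type*} [Fintype n] [RCLike 𝕜] {A B : Matrix n n 𝕜}

open scoped MatrixOrder in
lemma trace_mul_eq_zero_iff_of_posSemidef (hA : A.PosSemidef) (hB : B.PosSemidef) :
    (A * B).trace = 0 ↔ A * B = 0 := by
  classical
  obtain ⟨C, rfl⟩ := CStarAlgebra.nonneg_iff_eq_star_mul_self.mp hA.nonneg
  obtain ⟨D, rfl⟩ := CStarAlgebra.nonneg_iff_eq_star_mul_self.mp hB.nonneg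
  simp only [star_eq_conjTranspose]
  have hfactor : (Cᴴ * C * (Dᴴ * D)).trace = ((C * Dᴴ)ᴴ * (C * Dᴴ)).trace := by
    rw [← Matrix.mul_assoc, trace_mul_comm, conjTranspose_mul, conjTranspose_conjTranspose]
    simp only [Matrix.mul_assoc]
  rw [hfactor, trace_conjTranspose_mul_self_eq_zero_iff, conjTranspose_mul_self_mul_eq_zero,
    mul_conjTranspose_mul_self_eq_zero]

lemma exists_isometry_of_isStarProjection (hA : IsStarProjection A) :
    ∃ (r : ℕ) (V : Matrix n (Fin r) 𝕜), Vᴴ * V = 1 ∧ V * Vᴴ = A := by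
  classical
  have hherm : A.IsHermitian := hA.isSelfAdjoint
  have heigen (i : n) : hherm.eigenvalues i = 0 ∨ hherm.eigenvalues i = 1 :=
    hA.isIdempotentElem.spectrum_subset ℝ (hherm.eigenvalues_mem_spectrum_real i)
  let U : Matrix n n 𝕜 := hherm.eigenvectorUnitary
  let e := (Fintype.equivFin {i // hherm.eigenvalues i = 1}).symm
  let f := e.toEmbedding.trans (Function.Embedding.subtype _)
  refine ⟨_, U.submatrix id f, ?_, ?_⟩
  · rw [conjTranspose_submatrix, ← submatrix_mul _ _ _ _ _ Function.bijective_id,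
      ← star_eq_conjTranspose, Unitary.coe_star_mul_self, submatrix_one_embedding]
  · have hspec : A = U * diagonal (fun i ↦ (hherm.eigenvalues i : 𝕜)) * star U :=
      hherm.spectral_theorem.trans (Unitary.conjStarAlgAut_apply ..)
    ext a b
    calc (U.submatrix id f * (U.submatrix id f)ᴴ) a b
        = ∑ i : {i // hherm.eigenvalues i = 1}, U a i * star (U b i) :=
          e.sum_comp fun i : {i // hherm.eigenvalues i = 1} ↦ U a i * star (U b i)
      _ = ∑ i, if hherm.eigenvalues i = 1 then U a i * star (U b i) else 0 := by
          rw [← Finset.sum_filter, Finset.sum_subtype _ Finset.mem_filter_univ]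
      _ = ∑ i, U a i * (hherm.eigenvalues i : 𝕜) * star (U b i) := by
          refine Finset.sum_congr rfl fun i _ ↦ ?_
          rcases heigen i with hi | hi <;> simp [hi]
      _ = A a b := by
          conv_rhs => rw [hspec, mul_apply]
          simp only [mul_diagonal, star_apply]

variable [DecidableEq n]

/-- The orthogonal projection onto the range of a Hermitian matrix. It is the functional calculus
of `x ↦ x * x⁻¹`, which by the convention `0⁻¹ = 0` is the indicator of the nonzero reals; on
matrices that are not Hermitian the functional calculus has the junk value `0`. -/
noncomputable def supportProj (A : Matrix n n 𝕜) : Matrix n n 𝕜 :=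
  cfc (fun x : ℝ ↦ x * x⁻¹) A

lemma supportProj_eq_mul_cfc_inv (hA : A.IsHermitian) :
    supportProj A = A * cfc (fun x : ℝ ↦ x⁻¹) A := by
  rw [supportProj, cfc_mul _ _ A (A.finite_real_spectrum.continuousOn _)
    (A.finite_real_spectrum.continuousOn _), cfc_id' ℝ A hA.isSelfAdjoint]

lemma isStarProjection_supportProj (A : Matrix n n 𝕜) : IsStarProjection (supportProj A) where
  isIdempotentElem := by
    rw [IsIdempotentElem, supportProj, ← cfc_mul _ _ A (A.finite_real_spectrum.continuousOn _)
      (A.finite_real_spectrum.continuousOn _)]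
    congr! 2 with x
    by_cases hx : x = 0 <;> simp [hx]
  isSelfAdjoint := cfc_predicate _ A

lemma supportProj_mul_self (hA : A.IsHermitian) : supportProj A * A = A :=
  calc supportProj A * A = cfc (fun x : ℝ ↦ x * x⁻¹) A * cfc (fun x : ℝ ↦ x) A := by
        rw [cfc_id' ℝ A hA.isSelfAdjoint, supportProj]
    _ = cfc (fun x : ℝ ↦ x * x⁻¹ * x) A :=
        (cfc_mul _ _ A (A.finite_real_spectrum.continuousOn _)
          (A.finite_real_spectrum.continuousOn _)).symm
    _ = A := by simp only [mul_inv_mul_cancel, cfc_id' ℝ A hA.isSelfAdjoint]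

lemma mul_supportProj_eq_zero_iff (hA : A.IsHermitian) : B * supportProj A = 0 ↔ B * A = 0 := by
  constructor <;> intro h
  · rw [← supportProj_mul_self hA, ← Matrix.mul_assoc, h, Matrix.zero_mul]
  · rw [supportProj_eq_mul_cfc_inv hA, ← Matrix.mul_assoc, h, Matrix.zero_mul]

lemma supportProj_mul_eq_zero_iff (hA : A.IsHermitian) : supportProj A * B = 0 ↔ A * B = 0 := by
  have hsupp : (supportProj A)ᴴ = supportProj A := (isStarProjection_supportProj A).isSelfAdjoint
  rw [← conjTranspose_eq_zero, conjTranspose_mul, hsupp, mul_supportProj_eq_zero_iff hA,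
    ← conjTranspose_eq_zero, conjTranspose_mul, conjTranspose_conjTranspose, hA.eq]

lemma supportProj_mul_supportProj_eq_zero_iff (hA : A.IsHermitian) (hB : B.IsHermitian) :
    supportProj A * supportProj B = 0 ↔ A * B = 0 := by
  rw [supportProj_mul_eq_zero_iff hA, mul_supportProj_eq_zero_iff hB]

lemma supportProj_eq_zero_iff (hA : A.IsHermitian) : supportProj A = 0 ↔ A = 0 := by
  simpa only [Matrix.mul_one] using supportProj_mul_eq_zero_iff (B := 1) hA

lemma sum_supportProj [Fintype ι] {S : ι → Matrix n n 𝕜} (hS : ∀ i, (S i).IsHermitian)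
    (horth : Pairwise (S · * S · = 0)) : ∑ i, supportProj (S i) = supportProj (∑ i, S i) := by
  have hsum : (∑ i, S i).IsHermitian := isSelfAdjoint_sum _ fun i _ ↦ hS i
  set σ := ∑ i, S i with hσ
  have hpick (i : ι) : supportProj (S i) * σ = S i := by
    rw [hσ, Finset.mul_sum, Finset.sum_eq_single i, supportProj_mul_self (hS i)]
    · exact fun j _ hji ↦ (supportProj_mul_eq_zero_iff (hS i)).mpr (horth hji.symm)
    · simp
  have hle (i : ι) : supportProj (S i) * supportProj σ = supportProj (S i) := by
    have hcompl : supportProj (S i) * (1 - supportProj σ) = 0 := by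
      have hσcompl : σ * (1 - supportProj σ) = 0 :=
        (supportProj_mul_eq_zero_iff hsum).mp (isStarProjection_supportProj σ).mul_one_sub_self
      rw [supportProj_mul_eq_zero_iff (hS i), ← hpick i, Matrix.mul_assoc, hσcompl,
        Matrix.mul_zero]
    rw [mul_sub, mul_one, sub_eq_zero] at hcompl
    exact hcompl.symm
  have hge : (1 - ∑ i, supportProj (S i)) * supportProj σ = 0 := by
    rw [mul_supportProj_eq_zero_iff hsum, sub_mul, one_mul, Finset.sum_mul,
      Finset.sum_congr rfl fun i _ ↦ hpick i, sub_self]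
  rw [sub_mul, one_mul, Finset.sum_mul, Finset.sum_congr rfl fun i _ ↦ hle i, sub_eq_zero] at hge
  exact hge.symm

end Support

section CompletelyPositiveSemidefinite

variable {ι : Type*}

/-- The Gram matrix of a family of Hermitian matrices for the trace inner product. That inner
product is real on Hermitian matrices, so taking real parts loses nothing. -/
noncomputable def traceGram {n : Type*} [Fintype n] (ρ : ι → Matrix n n ℂ) : Matrix ι ι ℝ :=
  of fun i j ↦ (ρ i * ρ j).trace.re

lemma isCSPlus_traceGram [Fintype ι] {d : ℕ} (hd : 0 < d)
    {ρ : ι → Matrix (Fin d) (Fin d) ℂ} (hρ : ∀ i, (ρ i).PosSemidef) : IsCSPlus (traceGram ρ) :=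
  ⟨d, hd, ρ, hρ, fun i j ↦ Complex.conj_eq_iff_re.mp
    (star_trace_mul_of_isHermitian (hρ i).isHermitian (hρ j).isHermitian)⟩

lemma IsCSPlus.smul [Fintype ι] {M : Matrix ι ι ℝ} (hM : IsCSPlus M) {c : ℝ} (hc : 0 ≤ c) :
    IsCSPlus (c • M) := by
  obtain ⟨d, hd, ρ, hρ, hMρ⟩ := hM
  refine ⟨d, hd, fun i ↦ √c • ρ i, fun i ↦ (hρ i).smul c.sqrt_nonneg, fun i j ↦ ?_⟩
  rw [smul_mul_smul_comm, trace_smul, Real.mul_self_sqrt hc, ← hMρ, Matrix.smul_apply,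
    smul_eq_mul, Complex.ofReal_mul, Complex.real_smul]

end CompletelyPositiveSemidefinite

section Isomorphism

variable {α β : Type*} {G : SimpleGraph α} {H : SimpleGraph β}

lemma relEq_self_left {g : α} {h h' : β} : relEq G H g g h h' ↔ h = h' := by
  constructor
  · exact fun hrel ↦ hrel.1.mp rfl
  · rintro rfl
    simp [relEq]

lemma relEq_self_right {g g' : α} {h : β} : relEq G H g g' h h ↔ g = g' := by
  constructor
  · exact fun hrel ↦ hrel.1.mpr rfl
  · rintro rfl
    simp [relEq]

variable [Fintype α] [Fintype β] {n : Type*} [Fintype n]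

lemma IsIsoMatrix.card_eq {M : Matrix (α × β) (α × β) ℝ} (hM : IsIsoMatrix G H M) :
    Fintype.card α = Fintype.card β := by
  have hsquares : (Fintype.card α * Fintype.card α : ℝ) = Fintype.card β * Fintype.card β :=
    calc (Fintype.card α * Fintype.card α : ℝ)
        = ∑ g, ∑ g', ∑ h, ∑ h', M (g, h) (g', h') := by simp [hM.1]
      _ = ∑ g, ∑ h, ∑ h', ∑ g', M (g, h) (g', h') := by
          refine Finset.sum_congr rfl fun g _ ↦ ?_
          rw [Finset.sum_comm]
          exact Finset.sum_congr rfl fun h _ ↦ Finset.sum_comm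
      _ = ∑ h, ∑ h', ∑ g, ∑ g', M (g, h) (g', h') := by
          rw [Finset.sum_comm]
          exact Finset.sum_congr rfl fun h _ ↦ Finset.sum_comm
      _ = Fintype.card β * Fintype.card β := by simp [hM.2.1]
  exact Nat.mul_self_inj.mp (by exact_mod_cast hsquares)

lemma IsIsoMatrix.exists_common_sum [Nonempty n] {M : Matrix (α × β) (α × β) ℝ}
    (hM : IsIsoMatrix G H M) {ρ : α × β → Matrix n n ℂ} (hρ : ∀ i, (ρ i).IsHermitian)
    (hMρ : ∀ i j, (M i j : ℂ) = (ρ i * ρ j).trace) :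
    ∃ σ : Matrix n n ℂ, σ.IsHermitian ∧ σ ≠ 0 ∧
      (∀ g, ∑ h, ρ (g, h) = σ) ∧ ∀ h, ∑ g, ρ (g, h) = σ := by
  classical
  have hcard := hM.card_eq
  obtain ⟨hrow, hcol, -⟩ := hM
  have hrow_trace (g g' : α) : ∑ h, ∑ h', (ρ (g, h) * ρ (g', h')).trace = 1 := by
    simp only [← hMρ]
    exact_mod_cast hrow g g'
  have hcol_trace (h h' : β) : ∑ g, ∑ g', (ρ (g, h) * ρ (g', h')).trace = 1 := by
    simp only [← hMρ]
    exact_mod_cast hcol h h'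
  have hrow_eq := sum_eq_sum_of_sum_trace_mul_eq (ρ := fun g h ↦ ρ (g, h)) (fun _ _ ↦ hρ _)
    hrow_trace
  have hcol_eq := sum_eq_sum_of_sum_trace_mul_eq (ρ := fun h g ↦ ρ (g, h)) (fun _ _ ↦ hρ _)
    hcol_trace
  rcases isEmpty_or_nonempty α with hα | ⟨⟨g₀⟩⟩
  · have hβ : IsEmpty β := Fintype.card_eq_zero_iff.mp (hcard ▸ Fintype.card_eq_zero)
    exact ⟨1, isHermitian_one, one_ne_zero, hα.elim, hβ.elim⟩
  have hrow_ne_zero : ∑ h, ρ (g₀, h) ≠ 0 := fun hzero ↦ by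
    simpa [← trace_sum_mul_sum, hzero] using hrow_trace g₀ g₀
  refine ⟨∑ h, ρ (g₀, h), isSelfAdjoint_sum _ fun h _ ↦ hρ (g₀, h), hrow_ne_zero,
    fun g ↦ hrow_eq g g₀, fun h₀ ↦ ?_⟩
  have hdouble : Fintype.card α • ∑ g, ρ (g, h₀) = Fintype.card α • ∑ h, ρ (g₀, h) :=
    calc Fintype.card α • ∑ g, ρ (g, h₀) = ∑ h, ∑ g, ρ (g, h) := by
          simp only [hcol_eq _ h₀, Finset.sum_const, Finset.card_univ, hcard]
      _ = ∑ g, ∑ h, ρ (g, h) := Finset.sum_comm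
      _ = Fintype.card α • ∑ h, ρ (g₀, h) := by
          simp only [hrow_eq _ g₀, Finset.sum_const, Finset.card_univ]
  have hcard_ne_zero : (Fintype.card α : ℂ) ≠ 0 :=
    Nat.cast_ne_zero.mpr (Fintype.card_pos_iff.mpr ⟨g₀⟩).ne'
  apply smul_right_injective _ hcard_ne_zero
  simpa only [Nat.cast_smul_eq_nsmul] using hdouble

lemma isIsoMatrix_traceGram {d : ℕ} (hd : 0 < d) {P : α → β → Matrix (Fin d) (Fin d) ℂ}
    (hrow : ∀ g, ∑ h, P g h = 1) (hcol : ∀ h, ∑ g, P g h = 1)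
    (horth : ∀ g g' h h', ¬ relEq G H g g' h h' → P g h * P g' h' = 0) :
    IsIsoMatrix G H ((d : ℝ)⁻¹ • traceGram fun i : α × β ↦ P i.1 i.2) := by
  have hd₀ : (d : ℝ) ≠ 0 := by positivity
  refine ⟨fun g g' ↦ ?_, fun h h' ↦ ?_, fun g g' h h' hrel ↦ ?_⟩ <;>
    simp only [traceGram, Matrix.smul_apply, of_apply, smul_eq_mul]
  · simp only [← Finset.mul_sum, ← Complex.re_sum, ← trace_sum_mul_sum, hrow]
    simp [hd₀]
  · simp only [← Finset.mul_sum, ← Complex.re_sum, ← trace_sum_mul_sum, hcol]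
    simp [hd₀]
  · rw [horth g g' h h' hrel, trace_zero, Complex.zero_re, mul_zero]

lemma QuantumIso.exists_isoMatrix (hGH : QuantumIso G H) :
    ∃ M, IsIsoMatrix G H M ∧ IsCSPlus M := by
  obtain ⟨d, hd, P, hP, hrow, hcol, horth⟩ := hGH
  have hpsd (i : α × β) : (P i.1 i.2).PosSemidef :=
    posSemidef_of_isStarProjection ⟨(hP i.1 i.2).2, (hP i.1 i.2).1⟩
  exact ⟨_, isIsoMatrix_traceGram hd hrow hcol horth,
    (isCSPlus_traceGram hd hpsd).smul (by positivity)⟩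

lemma quantumIso_of_sum_eq_isStarProjection {E : Matrix n n ℂ}
    (hE : IsStarProjection E) (hE₀ : E ≠ 0) {P : α → β → Matrix n n ℂ}
    (hP : ∀ g h, IsStarProjection (P g h))
    (hrow : ∀ g, ∑ h, P g h = E) (hcol : ∀ h, ∑ g, P g h = E)
    (horth : ∀ g g' h h', ¬ relEq G H g g' h h' → P g h * P g' h' = 0) :
    QuantumIso G H := by
  classical
  obtain ⟨r, V, hVV, rfl⟩ := exists_isometry_of_isStarProjection hE
  have hr : r ≠ 0 := by
    rintro rfl
    exact hE₀ (by ext; simp [mul_apply])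
  have hPV (g : α) (h : β) : P g h * (V * Vᴴ) = P g h := by
    have hidem : OrthogonalIdempotents (P g) :=
      ⟨fun h ↦ (hP g h).isIdempotentElem, fun h h' hne ↦
        horth g g h h' (relEq_self_left.not.mpr hne)⟩
    rw [← hrow g, hidem.mul_sum_of_mem (Finset.mem_univ h)]
  have hmul (g g' : α) (h h' : β) :
      (Vᴴ * P g h * V) * (Vᴴ * P g' h' * V) = Vᴴ * (P g h * P g' h') * V :=
    calc (Vᴴ * P g h * V) * (Vᴴ * P g' h' * V)
        = Vᴴ * (P g h * (V * Vᴴ)) * P g' h' * V := by simp only [Matrix.mul_assoc]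
      _ = Vᴴ * (P g h * P g' h') * V := by rw [hPV, Matrix.mul_assoc Vᴴ]
  have hone : Vᴴ * (V * Vᴴ) * V = 1 := by
    rw [← Matrix.mul_assoc, hVV, Matrix.one_mul, hVV]
  refine ⟨r, Nat.pos_of_ne_zero hr, fun g h ↦ Vᴴ * P g h * V, fun g h ↦ ⟨?_, ?_⟩, fun g ↦ ?_,
    fun h ↦ ?_, fun g g' h h' hrel ↦ ?_⟩
  · exact isHermitian_conjTranspose_mul_mul V (hP g h).isSelfAdjoint
  · rw [hmul, (hP g h).isIdempotentElem.eq]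
  · rw [← Matrix.sum_mul, ← Matrix.mul_sum, hrow, hone]
  · rw [← Matrix.sum_mul, ← Matrix.mul_sum, hcol, hone]
  · rw [hmul, horth g g' h h' hrel, Matrix.mul_zero, Matrix.zero_mul]

lemma IsIsoMatrix.quantumIso {M : Matrix (α × β) (α × β) ℝ} (hM : IsIsoMatrix G H M)
    (hcs : IsCSPlus M) : QuantumIso G H := by
  obtain ⟨d, hd, ρ, hρ, hMρ⟩ := hcs
  have hherm (i : α × β) : (ρ i).IsHermitian := (hρ i).isHermitian
  have : Nonempty (Fin d) := ⟨⟨0, hd⟩⟩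
  obtain ⟨σ, hσ, hσ₀, hrow, hcol⟩ := hM.exists_common_sum hherm hMρ
  have horth (g g' : α) (h h' : β) (hrel : ¬ relEq G H g g' h h') :
      ρ (g, h) * ρ (g', h') = 0 := by
    rw [← trace_mul_eq_zero_iff_of_posSemidef (hρ _) (hρ _), ← hMρ, hM.2.2 g g' h h' hrel,
      Complex.ofReal_zero]
  refine quantumIso_of_sum_eq_isStarProjection (isStarProjection_supportProj σ)
    ((supportProj_eq_zero_iff hσ).not.mpr hσ₀) (P := fun g h ↦ supportProj (ρ (g, h)))
    (fun _ _ ↦ isStarProjection_supportProj _) (fun g ↦ ?_) (fun h ↦ ?_)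
    fun g g' h h' hrel ↦
      (supportProj_mul_supportProj_eq_zero_iff (hherm _) (hherm _)).mpr (horth g g' h h' hrel)
  · rw [← hrow g]
    exact sum_supportProj (fun _ ↦ hherm _) fun h h' hne ↦
      horth g g h h' (relEq_self_left.not.mpr hne)
  · rw [← hcol h]
    exact sum_supportProj (fun _ ↦ hherm _) fun g g' hne ↦
      horth g g' h h (relEq_self_right.not.mpr hne)

end Isomorphism

/-- `G` and `H` are quantum isomorphic iff there exists a `CS+`-isomorphism matrix. -/
theorem quantumIso_iff_csp_isoMatrix {α β : Type*} [Fintype α] [Fintype β]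
    (G : SimpleGraph α) (H : SimpleGraph β) :
    QuantumIso G H ↔ ∃ M, IsIsoMatrix G H M ∧ IsCSPlus M :=
  ⟨QuantumIso.exists_isoMatrix, fun ⟨_, hM, hcs⟩ ↦ hM.quantumIso hcs⟩
end

section
/- Two finite simple graphs G and H are partially equivalent (there exists a partial equivalence φ from the partially coherent algebra of G to the partially coherent algebra of H) if and only if G ≅_{S+} H, i.e., there exists an S+-isomorphism matrix for G to H. -/
open Matrix BigOperators

/-- The all-ones matrix. -/
def allOnes (V : Type*) : Matrix V V ℂ := Matrix.of fun _ _ => 1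

/-- A subspace `S` of `ℂ^{V×V}` is a partially coherent algebra (with respect to
`{I, A}`) if it contains `I`, `A` and `J`, is closed under matrix multiplication and
conjugate transposition, and is closed under Schur product with `I` and with `A`. -/
def IsPartiallyCoherent {V : Type*} [Fintype V] [DecidableEq V]
    (A : Matrix V V ℂ) (S : Submodule ℂ (Matrix V V ℂ)) : Prop :=
  (1 : Matrix V V ℂ) ∈ S ∧ A ∈ S ∧ allOnes V ∈ S ∧
  (∀ X ∈ S, ∀ Y ∈ S, X * Y ∈ S) ∧
  (∀ X ∈ S, Xᴴ ∈ S) ∧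
  (∀ X ∈ S, Matrix.hadamard (1 : Matrix V V ℂ) X ∈ S) ∧
  (∀ X ∈ S, Matrix.hadamard A X ∈ S)

/-- The partially coherent algebra of a graph: the smallest partially coherent
algebra containing the adjacency matrix. -/
noncomputable def pcAlgebra {V : Type*} [Fintype V] [DecidableEq V] (A : Matrix V V ℂ) :
    Submodule ℂ (Matrix V V ℂ) :=
  sInf {S | IsPartiallyCoherent A S}

/-- `G` and `H` are partially equivalent: there is a linear bijection between their
partially coherent algebras respecting conjugate transposition, multiplication,
`I ↦ I`, `A_G ↦ A_H`, `J ↦ J`, and Schur products with `I` and `A_G`. -/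
def PartiallyEquivalent {α β : Type*} [Fintype α] [Fintype β] [DecidableEq α] [DecidableEq β]
    (G : SimpleGraph α) (H : SimpleGraph β)
    [DecidableRel G.Adj] [DecidableRel H.Adj] : Prop :=
  ∃ Φ : Matrix α α ℂ →ₗ[ℂ] Matrix β β ℂ,
    Set.BijOn Φ (pcAlgebra (G.adjMatrix ℂ) : Set (Matrix α α ℂ))
      (pcAlgebra (H.adjMatrix ℂ) : Set (Matrix β β ℂ)) ∧
    (∀ M ∈ pcAlgebra (G.adjMatrix ℂ), Φ Mᴴ = (Φ M)ᴴ) ∧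
    (∀ M ∈ pcAlgebra (G.adjMatrix ℂ), ∀ N ∈ pcAlgebra (G.adjMatrix ℂ),
      Φ (M * N) = Φ M * Φ N) ∧
    Φ 1 = 1 ∧ Φ (G.adjMatrix ℂ) = H.adjMatrix ℂ ∧ Φ (allOnes α) = allOnes β ∧
    (∀ N ∈ pcAlgebra (G.adjMatrix ℂ),
      Φ (Matrix.hadamard 1 N) = Matrix.hadamard 1 (Φ N)) ∧
    (∀ N ∈ pcAlgebra (G.adjMatrix ℂ),
      Φ (Matrix.hadamard (G.adjMatrix ℂ) N) = Matrix.hadamard (H.adjMatrix ℂ) (Φ N))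

/-!
A matrix `M` indexed by `V_G × V_H` is the Choi matrix of a linear map `Ψ`, and it is an
isomorphism matrix exactly when `Ψ` preserves the sum of the entries, sends `J` to `J`, and
intertwines the Schur products with `I` and with the adjacency matrices.

If `M` is positive semidefinite then `Ψ` is completely positive, and it is unital and
trace-preserving; so is its adjoint `Ψ'`. On the matrices fixed by `Ψ' ∘ Ψ` the Kadison–Schwarz
inequality is an equality after taking traces, so `Ψ` is multiplicative there. These matrices
include the partially coherent algebra of `G`, on which `Ψ` is therefore a partial equivalence.

Conversely, extend a partial equivalence `φ` to all matrices by composing it with the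
trace-preserving conditional expectation `P` onto the partially coherent algebra. The Choi matrix
`C` of `φ ∘ P` is Hermitian and satisfies `C * C = C * (Z ⊗ 1)` with `Z` the Gram matrix of
`condExpFrame P`, which is positive definite; hence `C` is positive semidefinite, and so is its
real part.
-/

section Kraus

open scoped ComplexOrder

variable {𝕜 m n ι : Type*} [RCLike 𝕜] [Fintype m] [Fintype ι]

/-- The completely positive map with Kraus operators `K`. -/
def krausMap (K : ι → Matrix m n 𝕜) : Matrix m m 𝕜 →ₗ[𝕜] Matrix n n 𝕜 where
  toFun X := ∑ i, (K i)ᴴ * X * K i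
  map_add' X Y := by simp only [Matrix.mul_add, Matrix.add_mul, Finset.sum_add_distrib]
  map_smul' c X := by
    simp only [Matrix.mul_smul, Matrix.smul_mul, Finset.smul_sum, RingHom.id_apply]

lemma krausMap_apply (K : ι → Matrix m n 𝕜) (X : Matrix m m 𝕜) :
    krausMap K X = ∑ i, (K i)ᴴ * X * K i := rfl

lemma krausMap_conjTranspose (K : ι → Matrix m n 𝕜) (X : Matrix m m 𝕜) :
    krausMap K Xᴴ = (krausMap K X)ᴴ := by
  simp only [krausMap_apply, conjTranspose_sum, conjTranspose_mul, conjTranspose_conjTranspose,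
    Matrix.mul_assoc]

variable [Fintype n] [DecidableEq m] [DecidableEq n]

lemma krausMap_conjTranspose_mul_self_sub {K : ι → Matrix m n 𝕜} (hK : krausMap K 1 = 1)
    (Y : Matrix m m 𝕜) :
    krausMap K (Yᴴ * Y) - (krausMap K Y)ᴴ * krausMap K Y =
      ∑ i, (Y * K i - K i * krausMap K Y)ᴴ * (Y * K i - K i * krausMap K Y) := by
  set Z := krausMap K Y with hZ
  have expand (i : ι) : (Y * K i - K i * Z)ᴴ * (Y * K i - K i * Z) =
      (K i)ᴴ * (Yᴴ * Y) * K i - (K i)ᴴ * Yᴴ * K i * Z - Zᴴ * ((K i)ᴴ * Y * K i)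
        + Zᴴ * (((K i)ᴴ * (1 : Matrix m m 𝕜) * K i) * Z) := by
    simp only [conjTranspose_sub, conjTranspose_mul, Matrix.sub_mul, Matrix.mul_sub,
      Matrix.mul_assoc, Matrix.one_mul]
    abel
  simp only [expand, Finset.sum_add_distrib, Finset.sum_sub_distrib, ← Finset.mul_sum,
    ← Finset.sum_mul, ← krausMap_apply, hK, krausMap_conjTranspose, ← hZ]
  rw [Matrix.one_mul]
  abel

/-- Equality in the Kadison–Schwarz inequality at `Y`, which it is enough to test on traces, forces
`Y * K i = K i * krausMap K Y`, and so puts `Y` into the multiplicative domain. -/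
lemma krausMap_mul_of_trace_eq {K : ι → Matrix m n 𝕜} (hK : krausMap K 1 = 1) {Y : Matrix m m 𝕜}
    (hY : (krausMap K (Yᴴ * Y)).trace = ((krausMap K Y)ᴴ * krausMap K Y).trace)
    (X : Matrix m m 𝕜) : krausMap K (X * Y) = krausMap K X * krausMap K Y := by
  have trace_sum_zero : ∑ i, ((Y * K i - K i * krausMap K Y)ᴴ *
      (Y * K i - K i * krausMap K Y)).trace = 0 := by
    rw [← trace_sum, ← krausMap_conjTranspose_mul_self_sub hK, trace_sub, hY, sub_self]
  have intertwine (i : ι) : Y * K i = K i * krausMap K Y := by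
    have trace_zero := (Finset.sum_eq_zero_iff_of_nonneg fun i _ =>
      (posSemidef_conjTranspose_mul_self _).trace_nonneg).1 trace_sum_zero i (Finset.mem_univ i)
    exact sub_eq_zero.1 (trace_conjTranspose_mul_self_eq_zero_iff.1 trace_zero)
  rw [krausMap_apply, krausMap_apply K X, Finset.sum_mul]
  refine Finset.sum_congr rfl fun i _ => ?_
  simp only [Matrix.mul_assoc, intertwine]

end Kraus

section Choi

variable {R α β : Type*} [CommSemiring R] [Fintype α] [DecidableEq α]

/-- The correspondence between a linear map `Ψ` on square matrices and its Choi matrix, whose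
`(g, h), (g', h')` entry is the `h, h'` entry of `Ψ (single g g' 1)`. -/
def choiEquiv : Matrix (α × β) (α × β) R ≃ₗ[R] (Matrix α α R →ₗ[R] Matrix β β R) where
  toFun C :=
    { toFun := fun X => Matrix.of fun h h' => ∑ p : α × α, C (p.1, h) (p.2, h') * X p.1 p.2
      map_add' := fun X Y => by ext; simp [mul_add, Finset.sum_add_distrib]
      map_smul' := fun c X => by ext; simp [Finset.mul_sum, mul_left_comm] }
  map_add' C D := by ext; simp [add_mul, Finset.sum_add_distrib]
  map_smul' c C := by ext; simp [Finset.mul_sum, mul_assoc]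
  invFun Ψ := Matrix.of fun p q => Ψ (single p.1 q.1 1) p.2 q.2
  left_inv C := by ext; simp [single_apply, Fintype.sum_prod_type, ite_and]
  right_inv Ψ := by
    refine ext_linearMap _ fun g g' => LinearMap.ext_ring (ext fun h h' => ?_)
    simp [single_apply, Fintype.sum_prod_type, ite_and]

lemma choiEquiv_apply (C : Matrix (α × β) (α × β) R) (X : Matrix α α R) (h h' : β) :
    choiEquiv C X h h' = ∑ p : α × α, C (p.1, h) (p.2, h') * X p.1 p.2 := rfl

lemma choiEquiv_symm_apply (Ψ : Matrix α α R →ₗ[R] Matrix β β R) (p q : α × β) :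
    choiEquiv.symm Ψ p q = Ψ (single p.1 q.1 1) p.2 q.2 := rfl

lemma choiEquiv_single (C : Matrix (α × β) (α × β) R) (g g' : α) (h h' : β) :
    choiEquiv C (single g g' 1) h h' = C (g, h) (g', h') := by
  rw [← choiEquiv_symm_apply _ (g, h) (g', h'), LinearEquiv.symm_apply_apply]

lemma choiEquiv_hadamard_iff {C : Matrix (α × β) (α × β) R} {a : Matrix α α R}
    {b : Matrix β β R} :
    (∀ X, choiEquiv C (a ⊙ X) = b ⊙ choiEquiv C X) ↔
      ∀ g g' h h', C (g, h) (g', h') * a g g' = b h h' * C (g, h) (g', h') := by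
  constructor
  · intro hC g g' h h'
    have hadamard_single : a ⊙ single g g' (1 : R) = a g g' • single g g' 1 := by
      ext i j
      by_cases hij : g = i ∧ g' = j
      · simp [hij.1, hij.2]
      · simp [hij]
    have entry := congrFun₂ (hC (single g g' 1)) h h'
    rw [hadamard_single, map_smul] at entry
    simpa only [Matrix.smul_apply, hadamard_apply, choiEquiv_single, smul_eq_mul, mul_comm]
      using entry
  · intro hC X
    ext h h'
    simp only [hadamard_apply, choiEquiv_apply, Finset.mul_sum, ← mul_assoc, hC]

variable [Fintype β]

lemma sum_choiEquiv_iff {C : Matrix (α × β) (α × β) R} :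
    (∀ X, ∑ h, ∑ h', choiEquiv C X h h' = ∑ g, ∑ g', X g g') ↔
      ∀ g g', ∑ h, ∑ h', C (g, h) (g', h') = 1 := by
  constructor
  · intro hC g g'
    simpa [choiEquiv_single, single_apply, ite_and] using hC (single g g' 1)
  · intro hC X
    calc ∑ h, ∑ h', choiEquiv C X h h'
        = ∑ q : β × β, ∑ p : α × α, C (p.1, q.1) (p.2, q.2) * X p.1 p.2 := by
          simp only [Fintype.sum_prod_type (f := fun _ : β × β => _), choiEquiv_apply]
      _ = ∑ p : α × α, (∑ q : β × β, C (p.1, q.1) (p.2, q.2)) * X p.1 p.2 := by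
          simp only [Finset.sum_mul]
          exact Finset.sum_comm
      _ = ∑ g, ∑ g', X g g' := by
          simp only [Fintype.sum_prod_type, hC, one_mul]

lemma choiEquiv_symm_mul_apply (Ψ Θ : Matrix α α R →ₗ[R] Matrix β β R) (g g' : α) (h h' : β) :
    (choiEquiv.symm Ψ * choiEquiv.symm Θ) (g, h) (g', h') =
      (∑ k, Ψ (single g k 1) * Θ (single k g' 1)) h h' := by
  simp only [mul_apply, Fintype.sum_prod_type, choiEquiv_symm_apply, Matrix.sum_apply]

open scoped Kronecker in
lemma choiEquiv_symm_mul_kronecker_one_apply [DecidableEq β]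
    (Ψ : Matrix α α R →ₗ[R] Matrix β β R) (A : Matrix α α R) (g g' : α) (h h' : β) :
    (choiEquiv.symm Ψ * A ⊗ₖ (1 : Matrix β β R) : Matrix (α × β) (α × β) R) (g, h) (g', h') =
      Ψ (∑ k, A k g' • single g k 1) h h' := by
  simp only [map_sum, map_smul, Matrix.sum_apply, Matrix.smul_apply, smul_eq_mul]
  simp [mul_apply, Fintype.sum_prod_type, choiEquiv_symm_apply, one_apply, mul_comm]

end Choi

section ChoiStar

variable {R α β : Type*} [CommSemiring R] [StarRing R] [Fintype α]

lemma trace_conjTranspose_mul_eq_sum (X Y : Matrix α α R) :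
    (Xᴴ * Y).trace = ∑ p : α × α, star (X p.1 p.2) * Y p.1 p.2 := by
  rw [Fintype.sum_prod_type, Finset.sum_comm]
  simp only [Matrix.trace, diag_apply, mul_apply, conjTranspose_apply]

variable [DecidableEq α]

lemma isHermitian_choiEquiv_symm {Ψ : Matrix α α R →ₗ[R] Matrix β β R}
    (hΨ : ∀ X, Ψ Xᴴ = (Ψ X)ᴴ) : (choiEquiv.symm Ψ).IsHermitian := by
  ext p q
  rw [conjTranspose_apply, choiEquiv_symm_apply, choiEquiv_symm_apply, ← conjTranspose_apply,
    ← hΨ, conjTranspose_single, star_one]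

lemma choiEquiv_conjTranspose {C : Matrix (α × β) (α × β) R} (hC : C.IsHermitian)
    (X : Matrix α α R) : choiEquiv C Xᴴ = (choiEquiv C X)ᴴ := by
  ext h h'
  simp only [choiEquiv_apply, conjTranspose_apply, star_sum, star_mul', hC.apply]
  exact Fintype.sum_equiv (Equiv.prodComm α α) _ _ fun _ => rfl

lemma trace_choiEquiv_adjoint [Fintype β] [DecidableEq β] (C : Matrix (α × β) (α × β) R)
    (X : Matrix α α R) (Z : Matrix β β R) :
    ((choiEquiv C X)ᴴ * Z).trace =
      (Xᴴ * choiEquiv ((C.map star).submatrix Prod.swap Prod.swap) Z).trace := by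
  simp only [trace_conjTranspose_mul_eq_sum, choiEquiv_apply, star_sum, star_mul', Finset.sum_mul,
    Finset.mul_sum]
  rw [Finset.sum_comm]
  refine Finset.sum_congr rfl fun p _ => Finset.sum_congr rfl fun q _ => ?_
  simp only [submatrix_apply, map_apply, Prod.swap_prod_mk]
  ring

end ChoiStar

section PosSemidef

open scoped ComplexOrder MatrixOrder

variable {𝕜 α β n : Type*} [RCLike 𝕜]

lemma exists_krausMap_eq_choiEquiv [Fintype α] [Fintype β] [DecidableEq α]
    {C : Matrix (α × β) (α × β) 𝕜} (hC : C.PosSemidef) :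
    ∃ K : α × β → Matrix α β 𝕜, choiEquiv C = krausMap K := by
  classical
  obtain ⟨B, rfl⟩ := CStarAlgebra.nonneg_iff_eq_star_mul_self.mp hC.nonneg
  refine ⟨fun k => Matrix.of fun g h => B k (g, h), ?_⟩
  rw [← LinearEquiv.eq_symm_apply]
  ext p q
  simp [choiEquiv_symm_apply, krausMap_apply, mul_apply, single_apply, ite_and, Matrix.sum_apply,
    star_eq_conjTranspose]

lemma posSemidef_map_ofReal [Finite n] {M : Matrix n n ℝ} (hM : M.PosSemidef) :
    (M.map Complex.ofReal).PosSemidef := by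
  classical
  have := Fintype.ofFinite n
  obtain ⟨B, rfl⟩ := CStarAlgebra.nonneg_iff_eq_star_mul_self.mp hM.nonneg
  convert posSemidef_conjTranspose_mul_self (B.map Complex.ofReal)
  ext i j
  simp [mul_apply, star_eq_conjTranspose]

lemma posSemidef_map_re [Finite n] {C : Matrix n n ℂ} (hC : C.PosSemidef) :
    (C.map Complex.re).PosSemidef := by
  have := Fintype.ofFinite n
  refine .of_dotProduct_mulVec_nonneg (ext fun i j => ?_) fun x => ?_
  · simpa using congrArg Complex.re (hC.isHermitian.apply i j)
  · have re_nonneg := (Complex.le_def.1 (hC.dotProduct_mulVec_nonneg fun i => (x i : ℂ))).1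
    simpa [dotProduct, mulVec] using re_nonneg

lemma posSemidef_of_mul_self_eq_mul [Fintype n] {C Z : Matrix n n 𝕜} (hC : C.IsHermitian)
    (hZ : Z.PosDef) (hCZ : C * C = C * Z) : C.PosSemidef := by
  classical
  have comm : Z * C = C * Z := by
    have star_hCZ := congrArg conjTranspose hCZ
    rw [conjTranspose_mul, conjTranspose_mul, hC.eq, hZ.isHermitian.eq] at star_hCZ
    exact star_hCZ.symm.trans hCZ
  have isUnit_det := (isUnit_iff_isUnit_det Z).1 hZ.isUnit
  have congruence : C = Z⁻¹ * C * Z * (Z⁻¹ * C)ᴴ :=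
    calc C = C * C * Z⁻¹ := by rw [hCZ, mul_nonsing_inv_cancel_right _ _ isUnit_det]
      _ = Z⁻¹ * (Z * C) * C * Z⁻¹ := by rw [nonsing_inv_mul_cancel_left _ _ isUnit_det]
      _ = Z⁻¹ * C * Z * (Z⁻¹ * C)ᴴ := by
        rw [comm, conjTranspose_mul, hC.eq, conjTranspose_nonsing_inv, hZ.isHermitian.eq]
        simp only [Matrix.mul_assoc]
  rw [congruence]
  exact hZ.posSemidef.mul_mul_conjTranspose_same _

end PosSemidef

section ConditionalExpectation

lemma exists_linearMap_inner_eq {𝕜 E : Type*} [RCLike 𝕜] [NormedAddCommGroup E]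
    [InnerProductSpace 𝕜 E] (W : Submodule 𝕜 E)
    [W.HasOrthogonalProjection] :
    ∃ P : E →ₗ[𝕜] W, ∀ (s : W) (y : E), inner 𝕜 (s : E) (P y : E) = inner 𝕜 (s : E) y :=
  ⟨W.orthogonalProjectionOnto.toLinearMap, fun s y =>
    W.inner_orthogonalProjectionOnto_eq_of_mem_left s y⟩

open scoped ComplexOrder

variable {α β : Type*} [Fintype α] [DecidableEq α] {W : StarSubalgebra ℂ (Matrix α α ℂ)}

/-- The trace-preserving conditional expectation onto `W`, i.e. the projection onto `W` orthogonal
for the inner product `tr (Xᴴ * Y)`. -/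
def IsTraceCondExp (P : Matrix α α ℂ →ₗ[ℂ] W) : Prop :=
  ∀ (S : W) (Y : Matrix α α ℂ),
    ((S : Matrix α α ℂ)ᴴ * (P Y : Matrix α α ℂ)).trace = ((S : Matrix α α ℂ)ᴴ * Y).trace

lemma exists_isTraceCondExp (W : StarSubalgebra ℂ (Matrix α α ℂ)) :
    ∃ P : Matrix α α ℂ →ₗ[ℂ] W, IsTraceCondExp P := by
  let _ := toMatrixNormedAddCommGroup (1 : Matrix α α ℂ) PosDef.one
  let _ := toMatrixInnerProductSpace (1 : Matrix α α ℂ) PosDef.one.posSemidef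
  obtain ⟨P, hP⟩ := exists_linearMap_inner_eq (𝕜 := ℂ) (Subalgebra.toSubmodule W.toSubalgebra)
  refine ⟨P, fun S Y => ?_⟩
  have inner_eq : ((P Y : Matrix α α ℂ) * 1 * (S : Matrix α α ℂ)ᴴ).trace =
      (Y * 1 * (S : Matrix α α ℂ)ᴴ).trace := hP S Y
  simpa only [Matrix.mul_one, trace_mul_comm _ (S : Matrix α α ℂ)ᴴ] using inner_eq

namespace IsTraceCondExp

variable {P : Matrix α α ℂ →ₗ[ℂ] W} (hP : IsTraceCondExp P)
include hP

lemma eq_of_trace {Y : Matrix α α ℂ} {Q : W}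
    (hQ : ∀ S : W, ((S : Matrix α α ℂ)ᴴ * (Q : Matrix α α ℂ)).trace =
      ((S : Matrix α α ℂ)ᴴ * Y).trace) : P Y = Q := by
  have orthogonal (S : W) : ((S : Matrix α α ℂ)ᴴ * (P Y - Q : W)).trace = 0 := by
    rw [AddSubgroupClass.coe_sub, Matrix.mul_sub, trace_sub, hP S Y, hQ S, sub_self]
  exact sub_eq_zero.1 (Subtype.ext (trace_conjTranspose_mul_self_eq_zero_iff.1 (orthogonal _)))

lemma apply_coe (S : W) : P S = S := hP.eq_of_trace fun _ => rfl

lemma trace_adjoint (X Y : Matrix α α ℂ) :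
    ((P X : Matrix α α ℂ)ᴴ * Y).trace = (Xᴴ * (P Y : Matrix α α ℂ)).trace := by
  rw [← hP (P X) Y]
  apply star_injective
  simp only [← trace_conjTranspose, conjTranspose_mul, conjTranspose_conjTranspose]
  exact hP (P Y) X

lemma apply_conjTranspose (Y : Matrix α α ℂ) : P Yᴴ = star (P Y) := by
  refine hP.eq_of_trace fun S => star_injective ?_
  have trace_eq := hP (star S) Y
  simp only [← trace_conjTranspose, conjTranspose_mul, conjTranspose_conjTranspose,
    StarMemClass.coe_star, star_eq_conjTranspose] at trace_eq ⊢
  rw [trace_mul_comm, trace_eq, trace_mul_comm]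

lemma apply_mul_coe (Y : Matrix α α ℂ) (S : W) : P (Y * S) = P Y * S := by
  refine hP.eq_of_trace fun T => ?_
  have cycle (Z : Matrix α α ℂ) :
      ((T : Matrix α α ℂ)ᴴ * (Z * S)).trace = (((T * star S : W) : Matrix α α ℂ)ᴴ * Z).trace := by
    rw [MulMemClass.coe_mul, StarMemClass.coe_star, star_eq_conjTranspose, conjTranspose_mul,
      conjTranspose_conjTranspose, ← Matrix.mul_assoc, trace_mul_comm, Matrix.mul_assoc]
  rw [MulMemClass.coe_mul, cycle, cycle, hP]

lemma apply_hadamard {a : Matrix α α ℂ} (ha : ∀ g g', star (a g g') = a g g')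
    (haW : ∀ S ∈ W, a ⊙ S ∈ W) (Y : Matrix α α ℂ) :
    (P (a ⊙ Y) : Matrix α α ℂ) = a ⊙ (P Y : Matrix α α ℂ) := by
  have trace_hadamard (S Z : Matrix α α ℂ) : (Sᴴ * a ⊙ Z).trace = ((a ⊙ S)ᴴ * Z).trace := by
    simp only [trace_conjTranspose_mul_eq_sum, hadamard_apply, star_mul', ha, mul_left_comm,
      mul_assoc]
  refine congrArg Subtype.val (hP.eq_of_trace (Q := ⟨_, haW _ (P Y).2⟩) fun S => ?_)
  rw [trace_hadamard, trace_hadamard]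
  exact hP ⟨_, haW _ S.2⟩ Y

end IsTraceCondExp

/-- The matrix whose `m`-th column lists the entries of all `P (single k m 1)`. Its Gram matrix is
the positive definite factor by which squaring the Choi matrix of `P` rescales it. -/
def condExpFrame (P : Matrix α α ℂ →ₗ[ℂ] W) : Matrix (α × α × α) α ℂ :=
  Matrix.of fun (k, a, b) m => (P (single k m 1) : Matrix α α ℂ) a b

namespace IsTraceCondExp

variable {P : Matrix α α ℂ →ₗ[ℂ] W} (hP : IsTraceCondExp P)
include hP

lemma gram_condExpFrame_apply (m m' : α) :
    ((condExpFrame P)ᴴ * condExpFrame P) m m' =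
      ∑ k, (P (single k m' 1) : Matrix α α ℂ) k m := by
  have trace_eq_entry (k : α) : ((P (single k m 1) : Matrix α α ℂ)ᴴ * P (single k m' 1)).trace =
      (P (single k m' 1) : Matrix α α ℂ) k m := by
    rw [hP.trace_adjoint, hP.apply_coe, conjTranspose_single, star_one, trace_single_mul, one_smul]
  simp only [mul_apply, conjTranspose_apply, of_apply, condExpFrame, ← trace_eq_entry,
    trace_conjTranspose_mul_eq_sum, Fintype.sum_prod_type]

lemma sum_single_mul_apply_single (g g' : α) :
    ∑ k, single g k 1 * (P (single k g' 1) : Matrix α α ℂ) =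
      ∑ m, ((condExpFrame P)ᴴ * condExpFrame P) m g' • single g m 1 := by
  simp only [hP.gram_condExpFrame_apply]
  ext i j
  by_cases hi : g = i <;> simp [Matrix.sum_apply, single_apply, hi, mul_apply]

lemma posDef_gram_condExpFrame : ((condExpFrame P)ᴴ * condExpFrame P).PosDef := by
  refine .conjTranspose_mul_self _ ((injective_iff_map_eq_zero (mulVecLin _)).2 fun x hx => ?_)
  ext k
  have apply_row : P (∑ m, x m • single k m 1) = 0 := by
    ext a b
    have entry := congrFun hx (k, a, b)
    simpa [-smul_single, condExpFrame, mulVec, dotProduct, mul_comm, Matrix.sum_apply] using entry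
  have trace_row := hP 1 (∑ m, x m • single k m 1)
  rw [apply_row] at trace_row
  simpa [Matrix.trace, Matrix.sum_apply, single_apply, ite_and] using trace_row.symm

open scoped Kronecker in
lemma posSemidef_choiEquiv_symm_comp [Fintype β] (φ : W →⋆ₙₐ[ℂ] Matrix β β ℂ) :
    (choiEquiv.symm ((φ : W →ₗ[ℂ] Matrix β β ℂ) ∘ₗ P)).PosSemidef := by
  classical
  set Ψ : Matrix α α ℂ →ₗ[ℂ] Matrix β β ℂ := (φ : W →ₗ[ℂ] Matrix β β ℂ) ∘ₗ P
  have Ψ_apply (X : Matrix α α ℂ) : Ψ X = φ (P X) := rfl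
  have Ψ_conjTranspose (X : Matrix α α ℂ) : Ψ Xᴴ = (Ψ X)ᴴ := by
    rw [Ψ_apply, hP.apply_conjTranspose, map_star, Ψ_apply, star_eq_conjTranspose]
  have Ψ_mul (X Y : Matrix α α ℂ) : Ψ X * Ψ Y = Ψ (X * P Y) := by
    rw [Ψ_apply, Ψ_apply, Ψ_apply, hP.apply_mul_coe, map_mul]
  refine posSemidef_of_mul_self_eq_mul (isHermitian_choiEquiv_symm Ψ_conjTranspose)
    (hP.posDef_gram_condExpFrame.kronecker (PosDef.one (n := β))) ?_
  ext ⟨g, h⟩ ⟨g', h'⟩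
  rw [choiEquiv_symm_mul_apply, choiEquiv_symm_mul_kronecker_one_apply,
    ← hP.sum_single_mul_apply_single, map_sum]
  simp only [Ψ_mul]

end IsTraceCondExp

end ConditionalExpectation
section AllOnes

variable {α β : Type*}

lemma hadamard_allOnes (X : Matrix α α ℂ) : X ⊙ allOnes α = X := hadamard_of_one X

variable [Fintype α]

lemma allOnes_mul_mul_allOnes (X : Matrix α α ℂ) :
    allOnes α * X * allOnes α = (∑ g, ∑ g', X g g') • allOnes α := by
  ext
  simpa [allOnes, mul_apply] using Finset.sum_comm

lemma trace_conjTranspose_allOnes_mul (X : Matrix α α ℂ) :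
    ((allOnes α)ᴴ * X).trace = ∑ g, ∑ g', X g g' := by
  simp [trace_conjTranspose_mul_eq_sum, allOnes, Fintype.sum_prod_type]

lemma sum_one_hadamard [DecidableEq α] (X : Matrix α α ℂ) :
    ∑ g, ∑ g', (1 ⊙ X) g g' = X.trace := by
  simp [Matrix.trace, one_apply]

lemma choiEquiv_allOnes_apply [DecidableEq α] (C : Matrix (α × β) (α × β) ℂ) (h h' : β) :
    choiEquiv C (allOnes α) h h' = ∑ g, ∑ g', C (g, h) (g', h') := by
  simp [choiEquiv_apply, allOnes, Fintype.sum_prod_type]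

lemma sum_map_eq_sum [Fintype β] [Nonempty β] {Φ : Matrix α α ℂ →ₗ[ℂ] Matrix β β ℂ}
    {X : Matrix α α ℂ} (hJ : Φ (allOnes α) = allOnes β)
    (hX : Φ (allOnes α * X * allOnes α) = allOnes β * Φ X * allOnes β) :
    ∑ h, ∑ h', Φ X h h' = ∑ g, ∑ g', X g g' := by
  obtain ⟨b⟩ := ‹Nonempty β›
  rw [allOnes_mul_mul_allOnes, allOnes_mul_mul_allOnes, map_smul, hJ] at hX
  simpa [allOnes] using (congrFun₂ hX b b).symm

end AllOnes

section PartiallyCoherent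

variable {V : Type*} [Fintype V] [DecidableEq V]

lemma isPartiallyCoherent_pcAlgebra (A : Matrix V V ℂ) : IsPartiallyCoherent A (pcAlgebra A) := by
  simp only [IsPartiallyCoherent, pcAlgebra, Submodule.mem_sInf, Set.mem_ofPred_eq]
  exact ⟨fun S h => h.1, fun S h => h.2.1, fun S h => h.2.2.1,
    fun X hX Y hY S h => h.2.2.2.1 _ (hX S h) _ (hY S h),
    fun X hX S h => h.2.2.2.2.1 _ (hX S h),
    fun X hX S h => h.2.2.2.2.2.1 _ (hX S h), fun X hX S h => h.2.2.2.2.2.2 _ (hX S h)⟩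

/-- The partially coherent algebra of `A` as a star-subalgebra of the full matrix algebra. -/
def pcStarSubalgebra (A : Matrix V V ℂ) : StarSubalgebra ℂ (Matrix V V ℂ) where
  carrier := pcAlgebra A
  add_mem' := add_mem
  mul_mem' hX hY := (isPartiallyCoherent_pcAlgebra A).2.2.2.1 _ hX _ hY
  algebraMap_mem' c := by
    rw [Algebra.algebraMap_eq_smul_one]
    exact Submodule.smul_mem _ c (isPartiallyCoherent_pcAlgebra A).1
  star_mem' hX := (isPartiallyCoherent_pcAlgebra A).2.2.2.2.1 _ hX

end PartiallyCoherent

section IsoMap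

variable {α β : Type*} [DecidableEq α] [DecidableEq β]
  {G : SimpleGraph α} {H : SimpleGraph β} [DecidableRel G.Adj] [DecidableRel H.Adj]

lemma relEq_iff (g g' : α) (h h' : β) :
    relEq G H g g' h h' ↔ (1 : Matrix α α ℂ) g g' = (1 : Matrix β β ℂ) h h' ∧
      G.adjMatrix ℂ g g' = H.adjMatrix ℂ h h' := by
  simp only [relEq, one_apply, SimpleGraph.adjMatrix_apply]
  refine and_congr ?_ ?_ <;> split_ifs <;> simp_all

variable [Fintype α] [Fintype β]

variable (G H) in
/-- The linear maps whose Choi matrix satisfies, over `ℂ`, the linear constraints of an isomorphism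
matrix for `G` to `H`; see `isIsoMap_choiEquiv_iff`. -/
structure IsIsoMap (Ψ : Matrix α α ℂ →ₗ[ℂ] Matrix β β ℂ) : Prop where
  sum_map : ∀ X, ∑ h, ∑ h', Ψ X h h' = ∑ g, ∑ g', X g g'
  map_allOnes : Ψ (allOnes α) = allOnes β
  map_one_hadamard : ∀ X, Ψ (1 ⊙ X) = 1 ⊙ Ψ X
  map_adjMatrix_hadamard : ∀ X, Ψ (G.adjMatrix ℂ ⊙ X) = H.adjMatrix ℂ ⊙ Ψ X

lemma isIsoMap_choiEquiv_iff {C : Matrix (α × β) (α × β) ℂ} :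
    IsIsoMap G H (choiEquiv C) ↔
      (∀ g g', ∑ h, ∑ h', C (g, h) (g', h') = 1) ∧
      (∀ h h', ∑ g, ∑ g', C (g, h) (g', h') = 1) ∧
      ∀ g g' h h', ¬ relEq G H g g' h h' → C (g, h) (g', h') = 0 := by
  have hadamard_entry {a b c : ℂ} : c * a = b * c ↔ (a ≠ b → c = 0) := by
    rw [mul_comm b, mul_eq_mul_left_iff, ne_eq, or_iff_not_imp_left]
  have zero_iff : (∀ g g' h h', ¬ relEq G H g g' h h' → C (g, h) (g', h') = 0) ↔
      (∀ X, choiEquiv C (1 ⊙ X) = 1 ⊙ choiEquiv C X) ∧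
        ∀ X, choiEquiv C (G.adjMatrix ℂ ⊙ X) = H.adjMatrix ℂ ⊙ choiEquiv C X := by
    simp only [choiEquiv_hadamard_iff, hadamard_entry, relEq_iff, not_and_or, or_imp, forall_and,
      ne_eq]
  have allOnes_iff : choiEquiv C (allOnes α) = allOnes β ↔
      ∀ h h', ∑ g, ∑ g', C (g, h) (g', h') = 1 := by
    simp only [← choiEquiv_allOnes_apply, ← Matrix.ext_iff]
    rfl
  rw [← sum_choiEquiv_iff, ← allOnes_iff, zero_iff]
  exact ⟨fun h => ⟨h.1, h.2, h.3, h.4⟩, fun h => ⟨h.1, h.2.1, h.2.2.1, h.2.2.2⟩⟩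

namespace IsIsoMap

variable {Ψ : Matrix α α ℂ →ₗ[ℂ] Matrix β β ℂ}

lemma map_one (hΨ : IsIsoMap G H Ψ) : Ψ 1 = 1 := by
  rw [← hadamard_allOnes 1, hΨ.map_one_hadamard, hΨ.map_allOnes, hadamard_allOnes]

lemma map_adjMatrix (hΨ : IsIsoMap G H Ψ) : Ψ (G.adjMatrix ℂ) = H.adjMatrix ℂ := by
  rw [← hadamard_allOnes (G.adjMatrix ℂ), hΨ.map_adjMatrix_hadamard, hΨ.map_allOnes,
    hadamard_allOnes]

lemma trace_map (hΨ : IsIsoMap G H Ψ) (X : Matrix α α ℂ) : (Ψ X).trace = X.trace := by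
  rw [← sum_one_hadamard, ← sum_one_hadamard, ← hΨ.map_one_hadamard, hΨ.sum_map]

end IsIsoMap

lemma IsIsoMap.isIsoMatrix_map_re {C : Matrix (α × β) (α × β) ℂ} (hC : IsIsoMap G H (choiEquiv C)) :
    IsIsoMatrix G H (C.map Complex.re) := by
  obtain ⟨sum_right, sum_left, eq_zero⟩ := isIsoMap_choiEquiv_iff.1 hC
  refine ⟨fun g g' => ?_, fun h h' => ?_, fun g g' h h' hr => ?_⟩
  · simpa using congrArg Complex.re (sum_right g g')
  · simpa using congrArg Complex.re (sum_left h h')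
  · simpa using congrArg Complex.re (eq_zero g g' h h' hr)

end IsoMap

section IsoMatrix

open scoped ComplexOrder

variable {α β : Type*} [Fintype α] {G : SimpleGraph α} {H : SimpleGraph β}
  {M : Matrix (α × β) (α × β) ℝ}

lemma IsIsoMatrix.swap [Fintype β] (hM : IsIsoMatrix G H M) :
    IsIsoMatrix H G (M.submatrix Prod.swap Prod.swap) :=
  ⟨hM.2.1, hM.1, fun h h' g g' hr => hM.2.2 g g' h h' fun hr' => hr ⟨hr'.1.symm, hr'.2.symm⟩⟩

variable [DecidableEq α]

/-- The linear map on complex matrices whose Choi matrix is the real matrix `M`. -/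
noncomputable def isoMap (M : Matrix (α × β) (α × β) ℝ) : Matrix α α ℂ →ₗ[ℂ] Matrix β β ℂ :=
  choiEquiv (M.map Complex.ofReal)

lemma isoMap_conjTranspose (hM : M.IsHermitian) (X : Matrix α α ℂ) :
    isoMap M Xᴴ = (isoMap M X)ᴴ :=
  choiEquiv_conjTranspose (hM.map _ fun _ => (Complex.conj_ofReal _).symm) X

variable [Fintype β] [DecidableEq β]

lemma trace_isoMap_adjoint (M : Matrix (α × β) (α × β) ℝ) (X : Matrix α α ℂ) (Z : Matrix β β ℂ) :
    ((isoMap M X)ᴴ * Z).trace = (Xᴴ * isoMap (M.submatrix Prod.swap Prod.swap) Z).trace := by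
  rw [isoMap, trace_choiEquiv_adjoint, isoMap]
  congr!
  ext
  simp

lemma IsIsoMatrix.isIsoMap [DecidableRel G.Adj] [DecidableRel H.Adj] (hM : IsIsoMatrix G H M) :
    IsIsoMap G H (isoMap M) := by
  simp only [isoMap, isIsoMap_choiEquiv_iff, map_apply]
  refine ⟨fun g g' => ?_, fun h h' => ?_, fun g g' h h' hr => ?_⟩
  · exact_mod_cast hM.1 g g'
  · exact_mod_cast hM.2.1 h h'
  · exact_mod_cast hM.2.2 g g' h h' hr

lemma IsIsoMatrix.isoMap_mul (hM : IsIsoMatrix G H M) (hp : M.PosSemidef)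
    {Y : Matrix α α ℂ} (hY : isoMap (M.submatrix Prod.swap Prod.swap) (isoMap M Y) = Y)
    (X : Matrix α α ℂ) : isoMap M (X * Y) = isoMap M X * isoMap M Y := by
  classical
  have trace_eq : (isoMap M (Yᴴ * Y)).trace = ((isoMap M Y)ᴴ * isoMap M Y).trace := by
    rw [hM.isIsoMap.trace_map, trace_isoMap_adjoint, hY]
  have map_one := hM.isIsoMap.map_one
  obtain ⟨K, hK⟩ := exists_krausMap_eq_choiEquiv (posSemidef_map_ofReal hp)
  rw [isoMap, hK] at trace_eq map_one ⊢
  exact krausMap_mul_of_trace_eq map_one trace_eq X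

variable [DecidableRel G.Adj] [DecidableRel H.Adj]

variable (H M) in
/-- The matrices that `isoMap M` maps into the partially coherent algebra of `H` and that the
adjoint of `isoMap M` maps back to themselves. -/
noncomputable def roundTrip : Submodule ℂ (Matrix α α ℂ) :=
  LinearMap.eqLocus (isoMap (M.submatrix Prod.swap Prod.swap) ∘ₗ isoMap M) LinearMap.id ⊓
    (pcAlgebra (H.adjMatrix ℂ)).comap (isoMap M)

lemma mem_roundTrip {X : Matrix α α ℂ} :
    X ∈ roundTrip H M ↔ isoMap (M.submatrix Prod.swap Prod.swap) (isoMap M X) = X ∧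
      isoMap M X ∈ pcAlgebra (H.adjMatrix ℂ) := Iff.rfl

namespace IsIsoMatrix

lemma isPartiallyCoherent_roundTrip (hM : IsIsoMatrix G H M) (hp : M.PosSemidef) :
    IsPartiallyCoherent (G.adjMatrix ℂ) (roundTrip H M) := by
  have hp' : (M.submatrix Prod.swap Prod.swap).PosSemidef := hp.submatrix Prod.swap
  have hΨ := hM.isIsoMap
  have hΨ' := hM.swap.isIsoMap
  obtain ⟨one_mem, adj_mem, allOnes_mem, mul_mem, conj_mem, one_had_mem, adj_had_mem⟩ :=
    isPartiallyCoherent_pcAlgebra (H.adjMatrix ℂ)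
  simp only [IsPartiallyCoherent, mem_roundTrip]
  refine ⟨?_, ?_, ?_, ?_, ?_, ?_, ?_⟩
  · rw [hΨ.map_one, hΨ'.map_one]
    exact ⟨rfl, one_mem⟩
  · rw [hΨ.map_adjMatrix, hΨ'.map_adjMatrix]
    exact ⟨rfl, adj_mem⟩
  · rw [hΨ.map_allOnes, hΨ'.map_allOnes]
    exact ⟨rfl, allOnes_mem⟩
  · rintro X ⟨hX, hXmem⟩ Y ⟨hY, hYmem⟩
    have hY' : isoMap ((M.submatrix Prod.swap Prod.swap).submatrix Prod.swap Prod.swap)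
      (isoMap (M.submatrix Prod.swap Prod.swap) (isoMap M Y)) = isoMap M Y := congrArg (isoMap M) hY
    rw [hM.isoMap_mul hp hY, hM.swap.isoMap_mul hp' hY', hX, hY]
    exact ⟨rfl, mul_mem _ hXmem _ hYmem⟩
  · rintro X ⟨hX, hXmem⟩
    rw [isoMap_conjTranspose hp.isHermitian, isoMap_conjTranspose hp'.isHermitian, hX]
    exact ⟨rfl, conj_mem _ hXmem⟩
  · rintro X ⟨hX, hXmem⟩
    rw [hΨ.map_one_hadamard, hΨ'.map_one_hadamard, hX]
    exact ⟨rfl, one_had_mem _ hXmem⟩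
  · rintro X ⟨hX, hXmem⟩
    rw [hΨ.map_adjMatrix_hadamard, hΨ'.map_adjMatrix_hadamard, hX]
    exact ⟨rfl, adj_had_mem _ hXmem⟩

lemma pcAlgebra_le_roundTrip (hM : IsIsoMatrix G H M) (hp : M.PosSemidef) :
    pcAlgebra (G.adjMatrix ℂ) ≤ roundTrip H M :=
  sInf_le (hM.isPartiallyCoherent_roundTrip hp)

lemma partiallyEquivalent (hM : IsIsoMatrix G H M) (hp : M.PosSemidef) :
    PartiallyEquivalent G H := by
  have hΨ := hM.isIsoMap
  have le_roundTrip := hM.pcAlgebra_le_roundTrip hp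
  have le_roundTrip' := hM.swap.pcAlgebra_le_roundTrip (hp.submatrix Prod.swap)
  have bijOn : Set.BijOn (isoMap M) (pcAlgebra (G.adjMatrix ℂ)) (pcAlgebra (H.adjMatrix ℂ)) :=
    Set.InvOn.bijOn (f' := isoMap (M.submatrix Prod.swap Prod.swap))
      ⟨fun X hX => (le_roundTrip hX).1, fun Z hZ => (le_roundTrip' hZ).1⟩
      (fun X hX => (le_roundTrip hX).2) (fun Z hZ => (le_roundTrip' hZ).2)
  exact ⟨isoMap M, bijOn, fun X _ => isoMap_conjTranspose hp.isHermitian X,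
    fun X _ Y hY => hM.isoMap_mul hp (le_roundTrip hY).1 X, hΨ.map_one, hΨ.map_adjMatrix,
    hΨ.map_allOnes, fun X _ => hΨ.map_one_hadamard X, fun X _ => hΨ.map_adjMatrix_hadamard X⟩

end IsIsoMatrix

end IsoMatrix

section PartialEquivalence

open scoped ComplexOrder

variable {α β : Type*} [Fintype α] [DecidableEq α]

lemma isEmpty_of_injOn_pcAlgebra [IsEmpty β] {A : Matrix α α ℂ}
    {Φ : Matrix α α ℂ → Matrix β β ℂ} (hΦ : Set.InjOn Φ (pcAlgebra A)) : IsEmpty α := by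
  have one_eq_zero : (1 : Matrix α α ℂ) = 0 :=
    hΦ (isPartiallyCoherent_pcAlgebra A).1 (zero_mem _) (Subsingleton.elim _ _)
  exact ⟨fun a => by simpa using congrFun₂ one_eq_zero a a⟩

variable [Fintype β]

lemma sum_map_eq_sum_of_mem_pcAlgebra {A : Matrix α α ℂ} {Φ : Matrix α α ℂ →ₗ[ℂ] Matrix β β ℂ}
    (injOn : Set.InjOn Φ (pcAlgebra A))
    (map_mul : ∀ X ∈ pcAlgebra A, ∀ Y ∈ pcAlgebra A, Φ (X * Y) = Φ X * Φ Y)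
    (map_allOnes : Φ (allOnes α) = allOnes β) {X : Matrix α α ℂ} (hX : X ∈ pcAlgebra A) :
    ∑ h, ∑ h', Φ X h h' = ∑ g, ∑ g', X g g' := by
  cases isEmpty_or_nonempty β
  · have := isEmpty_of_injOn_pcAlgebra injOn
    simp
  · obtain ⟨-, -, allOnes_mem, mul_mem, -⟩ := isPartiallyCoherent_pcAlgebra A
    refine sum_map_eq_sum map_allOnes ?_
    rw [map_mul _ (mul_mem _ allOnes_mem _ hX) _ allOnes_mem, map_mul _ allOnes_mem _ hX,
      map_allOnes]

variable [DecidableEq β] {G : SimpleGraph α} {H : SimpleGraph β} [DecidableRel G.Adj]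
  [DecidableRel H.Adj]

namespace PartiallyEquivalent

lemma exists_isIsoMap (h : PartiallyEquivalent G H) :
    ∃ Ψ : Matrix α α ℂ →ₗ[ℂ] Matrix β β ℂ, IsIsoMap G H Ψ ∧ (choiEquiv.symm Ψ).PosSemidef := by
  obtain ⟨Φ, bijOn, map_conj, map_mul, -, -, map_allOnes, map_one_had, map_adj_had⟩ := h
  set A := G.adjMatrix ℂ
  obtain ⟨-, -, allOnes_mem, -, -, one_had_mem, adj_had_mem⟩ := isPartiallyCoherent_pcAlgebra A
  obtain ⟨P, hP⟩ := exists_isTraceCondExp (pcStarSubalgebra A)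
  let φ : pcStarSubalgebra A →⋆ₙₐ[ℂ] Matrix β β ℂ :=
    { toFun := fun S => Φ (S : Matrix α α ℂ)
      map_zero' := Φ.map_zero
      map_add' := fun S T => Φ.map_add S T
      map_smul' := fun c S => Φ.map_smul c S
      map_mul' := fun S T => map_mul _ S.2 _ T.2
      map_star' := fun S => map_conj _ S.2 }
  refine ⟨(φ : _ →ₗ[ℂ] Matrix β β ℂ) ∘ₗ P, ⟨fun X => ?_, ?_, fun X => ?_, fun X => ?_⟩,
    hP.posSemidef_choiEquiv_symm_comp φ⟩
  · have sum_apply := hP ⟨_, allOnes_mem⟩ X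
    rw [trace_conjTranspose_allOnes_mul, trace_conjTranspose_allOnes_mul] at sum_apply
    exact (sum_map_eq_sum_of_mem_pcAlgebra bijOn.injOn map_mul map_allOnes (P X).2).trans sum_apply
  · exact (congrArg φ (hP.apply_coe ⟨_, allOnes_mem⟩)).trans map_allOnes
  · have apply_one_had :=
      hP.apply_hadamard (a := 1) (fun g g' => by simp [one_apply, apply_ite]) one_had_mem X
    exact (congrArg Φ apply_one_had).trans (map_one_had _ (P X).2)
  · have apply_adj_had :=
      hP.apply_hadamard (a := A) (fun g g' => by simp [A, apply_ite]) adj_had_mem X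
    exact (congrArg Φ apply_adj_had).trans (map_adj_had _ (P X).2)

lemma exists_isIsoMatrix (h : PartiallyEquivalent G H) :
    ∃ M, IsIsoMatrix G H M ∧ M.PosSemidef := by
  obtain ⟨Ψ, hΨ, hpos⟩ := h.exists_isIsoMap
  refine ⟨(choiEquiv.symm Ψ).map Complex.re, IsIsoMap.isIsoMatrix_map_re ?_, posSemidef_map_re hpos⟩
  rwa [LinearEquiv.apply_symm_apply]

end PartiallyEquivalent

end PartialEquivalence

/-- Two graphs are partially equivalent iff they are `S+`-isomorphic. -/
theorem partiallyEquivalent_iff_sPlus_iso {α β : Type*}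
    [Fintype α] [Fintype β] [DecidableEq α] [DecidableEq β]
    (G : SimpleGraph α) (H : SimpleGraph β)
    [DecidableRel G.Adj] [DecidableRel H.Adj] :
    PartiallyEquivalent G H ↔ ∃ M, IsIsoMatrix G H M ∧ M.PosSemidef := by
  exact ⟨PartiallyEquivalent.exists_isIsoMatrix, fun ⟨_, hM, hpos⟩ => hM.partiallyEquivalent hpos⟩
end

section
/- Let G and H be finite simple graphs. Then G ≅_{S+} H if and only if the first level of the Lasserre hierarchy for graph isomorphism is feasible, i.e., there exists a real symmetric positive semidefinite matrix N with rows and columns indexed by {∗} ∪ (V_G × V_H) such that: N_{∗,∗} = 1; N_{p,p} = N_{∗,p} for every p ∈ V_G × V_H; Σ_{h∈V_H} N_{∗,(g,h)} = 1 for every g ∈ V_G; Σ_{g∈V_G} N_{∗,(g,h)} = 1 for every h ∈ V_H; and N_{(g,h),(g',h')} = 0 whenever rel(g,g') ≠ rel(h,h'). Furthermore, G ≅_{DNN} H if and only if such a matrix N exists with all entries nonnegative. -/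
open Matrix BigOperators

/-- Feasibility of the first level of the Lasserre hierarchy for isomorphism of `G`
and `H`: a real symmetric psd matrix indexed by `{∗} ∪ (V_G × V_H)` (here `none = ∗`)
with the moment constraints. -/
def LasserreLevelOne {α β : Type*} [Fintype α] [Fintype β]
    (G : SimpleGraph α) (H : SimpleGraph β)
    (N : Matrix (Option (α × β)) (Option (α × β)) ℝ) : Prop :=
  N.PosSemidef ∧
  N none none = 1 ∧
  (∀ p : α × β, N (some p) (some p) = N none (some p)) ∧
  (∀ g : α, ∑ h : β, N none (some (g, h)) = 1) ∧
  (∀ h : β, ∑ g : α, N none (some (g, h)) = 1) ∧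
  (∀ g g' h h', ¬ relEq G H g g' h h' → N (some (g, h)) (some (g', h')) = 0)

/-!
In a positive semidefinite matrix, read as a Gram matrix, two sums of Gram vectors that have the
same norm and whose inner product is its square are equal. For an isomorphism matrix this says that
the sum of the Gram vectors at `(g, h)` over `h` does not depend on `g`: it is the vector to adjoin
at the index `∗`, and by orthogonality its inner product with the vector at `p` is the diagonal
entry at `p`. Conversely, at a solution of the Lasserre program, each such sum equals the vector at
`∗`, a unit vector, and restricting to `V_G × V_H` gives an isomorphism matrix.
-/

theorem sum_sum_eq_sum_diag_of_pairwise {κ R : Type*} [Fintype κ] [AddCommMonoid R]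
    {f : κ → κ → R} (hf : Pairwise fun i j => f i j = 0) :
    ∑ i, ∑ j, f i j = ∑ i, f i i :=
  Finset.sum_congr rfl fun i _ => Fintype.sum_eq_single i fun _ hj => hf hj.symm

section PosSemidef

open scoped ComplexOrder

variable {𝕜 ι κ κ' : Type*} [RCLike 𝕜] [Fintype κ] [Fintype κ'] {A : Matrix ι ι 𝕜}

theorem mulVec_eq_of_dotProduct_mulVec_eq [Fintype ι] (hA : A.PosSemidef) {x y : ι → 𝕜}
    (hxy : star x ⬝ᵥ A *ᵥ y = star x ⬝ᵥ A *ᵥ x) (hyy : star y ⬝ᵥ A *ᵥ y = star x ⬝ᵥ A *ᵥ x) :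
    A *ᵥ x = A *ᵥ y := by
  have hstar (v w : ι → 𝕜) : star v ⬝ᵥ A *ᵥ w = star (star w ⬝ᵥ A *ᵥ v) := by
    rw [star_dotProduct, star_mulVec, hA.isHermitian.eq, dotProduct_mulVec]
  have hyx : star y ⬝ᵥ A *ᵥ x = star x ⬝ᵥ A *ᵥ x := by
    rw [hstar y x, hxy, ← hstar x x]
  have hsub : star (x - y) ⬝ᵥ A *ᵥ (x - y) = 0 := by
    simp only [star_sub, mulVec_sub, sub_dotProduct, dotProduct_sub, hxy, hyx, hyy, sub_self]
  rwa [hA.dotProduct_mulVec_zero_iff, mulVec_sub, sub_eq_zero] at hsub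

theorem sum_apply_eq_of_sum_sum_apply_eq (hA : A.PosSemidef) (u : κ → ι) (v : κ' → ι)
    (huv : ∑ i, ∑ j, A (u i) (v j) = ∑ i, ∑ j, A (u i) (u j))
    (hvv : ∑ i, ∑ j, A (v i) (v j) = ∑ i, ∑ j, A (u i) (u j)) (q : ι) :
    ∑ i, A q (u i) = ∑ j, A q (v j) := by
  -- On the finite index type `κ ⊕ κ' ⊕ Unit`, both sums are values of `A` on block indicators.
  have h := mulVec_eq_of_dotProduct_mulVec_eq
    (hA.submatrix (Sum.elim u (Sum.elim v fun _ : Unit => q)))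
    (x := Sum.elim 1 0) (y := Sum.elim 0 (Sum.elim 1 0))
    (by simpa [mulVec, dotProduct] using huv) (by simpa [mulVec, dotProduct] using hvv)
  simpa [mulVec, dotProduct] using congrFun h (.inr (.inr ()))

theorem sum_apply_eq_apply_of_pairwise_eq_zero (hA : A.PosSemidef) (o : ι) (u : κ → ι)
    (horth : Pairwise fun i j => A (u i) (u j) = 0) (hdiag : ∀ i, A (u i) (u i) = A o (u i))
    (hsum : ∑ i, A o (u i) = A o o) (q : ι) :
    ∑ i, A q (u i) = A q o := by
  have huu : ∑ i, ∑ j, A (u i) (u j) = A o o := by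
    rw [sum_sum_eq_sum_diag_of_pairwise horth, ← hsum]
    exact Finset.sum_congr rfl fun i _ => hdiag i
  simpa using (sum_apply_eq_of_sum_sum_apply_eq hA (fun _ : Unit => o) u
    (by simpa using hsum) (by simpa using huu) q).symm

end PosSemidef

section MomentMatrix

variable {ι R : Type*}

/-- The matrix `M` bordered by its diagonal, with corner entry `1` at the index `none = ∗`. This is
the level one moment matrix whose quadratic moments are the entries of `M`: a `0`-`1` variable
equals its square, so its first moment is a diagonal entry. -/
def momentMatrix [One R] (M : Matrix ι ι R) : Matrix (Option ι) (Option ι) R :=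
  of fun
    | none, none => 1
    | none, some p => M p p
    | some p, none => M p p
    | some p, some q => M p q

theorem momentMatrix_nonneg [Zero R] [One R] [LE R] [ZeroLEOneClass R] {M : Matrix ι ι R}
    (hM : ∀ p q, 0 ≤ M p q) : ∀ x y, 0 ≤ momentMatrix M x y
  | none, none => zero_le_one
  | none, some p => hM p p
  | some p, none => hM p p
  | some p, some q => hM p q

variable [Ring R] [PartialOrder R] [StarRing R]

theorem posSemidef_momentMatrix_of_isEmpty [IsEmpty ι] [StarOrderedRing R] (M : Matrix ι ι R) :
    (momentMatrix M).PosSemidef := by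
  classical
  have hone : momentMatrix M = 1 := by
    ext (_ | p) (_ | q)
    · rfl
    all_goals exact isEmptyElim ‹ι›
  exact hone ▸ PosSemidef.one

theorem posSemidef_momentMatrix_of_mulVec_eq_diag [Fintype ι] {M : Matrix ι ι R}
    (hM : M.PosSemidef) {x : ι → R} (hdiag : M *ᵥ x = M.diag) (hx : star x ⬝ᵥ M *ᵥ x = 1) :
    (momentMatrix M).PosSemidef := by
  classical
  let v : Option ι → ι → R := fun a => a.elim x fun p => Pi.single p 1
  let B : Matrix ι (Option ι) R := of fun i a => v a i
  have hentry (a b : Option ι) : (Bᴴ * M * B) a b = star (v a) ⬝ᵥ M *ᵥ v b := by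
    rw [Matrix.mul_assoc]
    rfl
  have hvecMul : star x ᵥ* M = M.diag := by
    rw [← hM.isHermitian.eq, ← star_mulVec, hdiag]
    ext p
    simp [hM.isHermitian.apply p p, hM.isHermitian.eq]
  have hcross (q : ι) : star x ⬝ᵥ M *ᵥ Pi.single q 1 = M q q := by
    rw [dotProduct_mulVec, hvecMul, dotProduct_single_one, diag_apply]
  have hB : momentMatrix M = Bᴴ * M * B := by
    ext (_ | p) (_ | q) <;> rw [hentry]
    · exact hx.symm
    · exact (hcross q).symm
    · simp [v, momentMatrix, hdiag]
    · simp [v, momentMatrix]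
  exact hB ▸ hM.conjTranspose_mul_mul_same B

end MomentMatrix

section Isomorphism

variable {α β : Type*} {G : SimpleGraph α} {H : SimpleGraph β}

theorem not_relEq_of_ne_right {h h' : β} (hne : h ≠ h') (g : α) : ¬ relEq G H g g h h' :=
  fun hrel => hne (hrel.1.1 rfl)

theorem not_relEq_of_ne_left {g g' : α} (hne : g ≠ g') (h : β) : ¬ relEq G H g g' h h :=
  fun hrel => hne (hrel.1.2 rfl)

variable [Fintype α] [Fintype β]

namespace IsIsoMatrix

variable {M : Matrix (α × β) (α × β) ℝ}

theorem pairwise_eq_zero_right (hM : IsIsoMatrix G H M) (g : α) :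
    Pairwise fun h h' => M (g, h) (g, h') = 0 :=
  fun _ _ hne => hM.2.2 _ _ _ _ (not_relEq_of_ne_right hne g)

theorem pairwise_eq_zero_left (hM : IsIsoMatrix G H M) (h : β) :
    Pairwise fun g g' => M (g, h) (g', h) = 0 :=
  fun _ _ hne => hM.2.2 _ _ _ _ (not_relEq_of_ne_left hne h)

theorem sum_diag_right (hM : IsIsoMatrix G H M) (g : α) : ∑ h, M (g, h) (g, h) = 1 := by
  rw [← sum_sum_eq_sum_diag_of_pairwise (hM.pairwise_eq_zero_right g), hM.1]

theorem sum_diag_left (hM : IsIsoMatrix G H M) (h : β) : ∑ g, M (g, h) (g, h) = 1 := by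
  rw [← sum_sum_eq_sum_diag_of_pairwise (hM.pairwise_eq_zero_left h), hM.2.1]

theorem sum_apply_eq_diag (hM : IsIsoMatrix G H M) (hpos : M.PosSemidef) (g : α) (p : α × β) :
    ∑ h, M p (g, h) = M p p := by
  obtain ⟨g', h'⟩ := p
  calc ∑ h, M (g', h') (g, h) = ∑ h, M (g', h') (g', h) :=
        sum_apply_eq_of_sum_sum_apply_eq hpos (g, ·) (g', ·)
          (by simp only [hM.1]) (by simp only [hM.1]) (g', h')
    _ = M (g', h') (g', h') :=
        Fintype.sum_eq_single h' fun _ hne => hM.pairwise_eq_zero_right g' hne.symm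

theorem posSemidef_momentMatrix (hM : IsIsoMatrix G H M) (hpos : M.PosSemidef) :
    (momentMatrix M).PosSemidef := by
  classical
  rcases isEmpty_or_nonempty α with _ | ⟨⟨g⟩⟩
  · exact posSemidef_momentMatrix_of_isEmpty M
  · have hmulVec : M *ᵥ (∑ h, Pi.single (g, h) 1) = M.diag := by
      ext p
      simpa [mulVec_sum] using hM.sum_apply_eq_diag hpos g p
    refine posSemidef_momentMatrix_of_mulVec_eq_diag hpos hmulVec ?_
    simpa [hmulVec, sum_dotProduct, ← Pi.single_star] using hM.sum_diag_right g

theorem lasserreLevelOne_momentMatrix (hM : IsIsoMatrix G H M) (hpos : M.PosSemidef) :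
    LasserreLevelOne G H (momentMatrix M) :=
  ⟨hM.posSemidef_momentMatrix hpos, rfl, fun _ => rfl, hM.sum_diag_right, hM.sum_diag_left,
    hM.2.2⟩

end IsIsoMatrix

namespace LasserreLevelOne

variable {N : Matrix (Option (α × β)) (Option (α × β)) ℝ}

theorem sum_apply_right_eq_apply_none (hN : LasserreLevelOne G H N) (g : α) (x : Option (α × β)) :
    ∑ h, N x (some (g, h)) = N x none := by
  obtain ⟨hpos, hone, hdiag, hsum, -, hzero⟩ := hN
  exact sum_apply_eq_apply_of_pairwise_eq_zero hpos none (fun h => some (g, h))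
    (fun _ _ hne => hzero _ _ _ _ (not_relEq_of_ne_right hne g)) (fun _ => hdiag _)
    ((hsum g).trans hone.symm) x

theorem sum_apply_left_eq_apply_none (hN : LasserreLevelOne G H N) (h : β) (x : Option (α × β)) :
    ∑ g, N x (some (g, h)) = N x none := by
  obtain ⟨hpos, hone, hdiag, -, hsum, hzero⟩ := hN
  exact sum_apply_eq_apply_of_pairwise_eq_zero hpos none (fun g => some (g, h))
    (fun _ _ hne => hzero _ _ _ _ (not_relEq_of_ne_left hne h)) (fun _ => hdiag _)
    ((hsum h).trans hone.symm) x

theorem isIsoMatrix_submatrix (hN : LasserreLevelOne G H N) :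
    IsIsoMatrix G H (N.submatrix some some) := by
  have hsymm (p : α × β) : N (some p) none = N none (some p) := hN.1.isHermitian.apply _ _
  have hone : N none none = 1 := hN.2.1
  refine ⟨fun _ _ => ?_, fun _ _ => ?_, hN.2.2.2.2.2⟩
  · simp only [submatrix_apply, hN.sum_apply_right_eq_apply_none, hsymm, hone]
  · simp only [submatrix_apply, hN.sum_apply_left_eq_apply_none, hsymm, hone]

end LasserreLevelOne

end Isomorphism

/-- `G ≅_{S+} H` iff the first level of the Lasserre hierarchy for graph isomorphism
is feasible; and `G ≅_{DNN} H` iff it is feasible with nonnegative entries. -/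
theorem sPlus_dnn_iso_iff_lasserre {α β : Type*} [Fintype α] [Fintype β]
    (G : SimpleGraph α) (H : SimpleGraph β) :
    ((∃ M, IsIsoMatrix G H M ∧ M.PosSemidef) ↔
      ∃ N, LasserreLevelOne G H N) ∧
    ((∃ M, IsIsoMatrix G H M ∧ M.PosSemidef ∧ ∀ p q, 0 ≤ M p q) ↔
      ∃ N, LasserreLevelOne G H N ∧ ∀ x y, 0 ≤ N x y) := by
  refine ⟨⟨?_, ?_⟩, ⟨?_, ?_⟩⟩
  · rintro ⟨M, hM, hpos⟩
    exact ⟨momentMatrix M, hM.lasserreLevelOne_momentMatrix hpos⟩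
  · rintro ⟨N, hN⟩
    exact ⟨N.submatrix some some, hN.isIsoMatrix_submatrix, hN.1.submatrix some⟩
  · rintro ⟨M, hM, hpos, hnonneg⟩
    exact ⟨momentMatrix M, hM.lasserreLevelOne_momentMatrix hpos, momentMatrix_nonneg hnonneg⟩
  · rintro ⟨N, hN, hnonneg⟩
    exact ⟨N.submatrix some some, hN.isIsoMatrix_submatrix, hN.1.submatrix some,
      fun _ _ => hnonneg _ _⟩
end
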